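/- arXiv:1910.06993 — 10 statements merged into one kernel-verified Lean document; each statement's English description precedes it below -/
import Mathlib

section
/- Let n ≥ 2 and t ∈ [0,1]. The maximum of the length |B_1^n ∩ ℓ| over all lines ℓ in ℝ^n at distance t from the origin equals: 2/(t + √(1−t²)) if t ∈ [0, 1/√2]; t − √(t² − 1/2) if t ∈ (1/√2, 3/4]; and 2 − 2t if t ∈ (3/4, 1]. -/
/-!
Parametrise a line at distance `t` from the origin as `s ↦ x + s u` with `‖u‖ = 1`, `x ⟂ u` and
`‖x‖ = t`. Its chord in the cross-polytope is then isometric to a convex set of parameters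
(`hausdorffMeasure_chord`), so it is enough to bound the distance of any two points
`p = x + a u`, `q = x + b u` of the chord, and to exhibit two points which attain the bound.

*Bound valid for every `t`* (`chord_le_of_l1`). Put `L = |a - b|` and `h = ∑ |p i| |q i|`. Writing
`t L` as a combination of the `2 × 2` minors of `(u, x / t)`, all of absolute value at most `1`,
gives `t L ≤ 1 - h` (`wedge_le`). On the other hand `L² ≤ ∑ (|p i| + |q i|)² ≤ 2 + 2 h²`
(`sum_sq_add_sq_le`). Together `L² ≤ 2 + 2 (1 - t L)²`, that is `L (t + √(1 - t²)) ≤ 2`.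

*Bound for `t > 1/√2`* (`exists_chord_le`). Put `v = x / t`. As `⟪v, p⟫ = t` and `‖p‖₁ ≤ 1`, some
coordinate `c` of `v` has `t ≤ |c| ≤ 1`; replace it by `|c|`. Let `e` be the corresponding vertex
`±e_i` of the cross-polytope. The cross-polytope lies in the circular cone
`‖y - ⟪e, y⟫ e‖ ≤ 1 - ⟪e, y⟫` with apex `e`, and inside that cone a chord lying in the hyperplane
`⟪v, ·⟫ = t` has length at most `2 (c - t) / (2 c² - 1)` (`cone_chord_le`). Maximising over
`c ∈ [t, 1]` gives `c = t + √(t² - 1/2)` if `t ≤ 3/4` and `c = 1` otherwise.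

*Sharpness.* All maximisers are found in the coordinate plane of the first two axes
(`exists_planar_chord`): for `t ≤ 1/√2` a chord with an endpoint at a vertex, and for `t > 1/√2` a
chord which cuts off a vertex (`exists_corner_chord`).
-/

open MeasureTheory Metric Set
open scoped ENNReal

/-! ### The bound for every distance -/

/-- In the case `∑ a = ∑ b = 1` this is a union bound. Let `X, X'` be independent with law `a` and
`Y, Y'` independent with law `b`; if exactly one of `X = Y`, `X' = Y'` holds, then `X ≠ X'` or
`Y ≠ Y'`. Hence `2 h (1 - h) ≤ (1 - ∑ a²) + (1 - ∑ b²)` with `h = ∑ a b`. -/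
lemma sum_sq_add_sq_le {ι : Type*} [Fintype ι] (a b : ι → ℝ) (ha : ∀ i, 0 ≤ a i)
    (hb : ∀ i, 0 ≤ b i) (hS : ∑ i, a i ≤ 1) (hT : ∑ i, b i ≤ 1) :
    ∑ i, a i ^ 2 + ∑ i, b i ^ 2 + 2 * ∑ i, a i * b i ≤ 2 + 2 * (∑ i, a i * b i) ^ 2 := by
  classical
  set S := ∑ i, a i with hSdef
  set h := ∑ i, a i * b i with hh
  set Q := ∑ i, b i ^ 2 with hQ
  have hS0 : 0 ≤ S := Finset.sum_nonneg fun i _ => ha i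
  have hb1 : ∀ i, b i ≤ 1 := fun i =>
    (Finset.single_le_sum (fun j _ => hb j) (Finset.mem_univ i)).trans hT
  have hhS : h ≤ S := Finset.sum_le_sum fun i _ => by nlinarith [ha i, hb1 i]
  have hQi : ∀ i, 2 * b i * (1 - b i) ≤ 1 - Q := by
    intro i
    have h1 : Q = b i ^ 2 + ∑ j ∈ Finset.univ.erase i, b j ^ 2 :=
      (Finset.add_sum_erase _ _ (Finset.mem_univ i)).symm
    have h2 : ∑ j, b j = b i + ∑ j ∈ Finset.univ.erase i, b j :=
      (Finset.add_sum_erase _ _ (Finset.mem_univ i)).symm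
    have h3 : ∑ j ∈ Finset.univ.erase i, b j ^ 2 ≤ (∑ j ∈ Finset.univ.erase i, b j) ^ 2 :=
      Finset.sum_sq_le_sq_sum_of_nonneg fun j _ => hb j
    have h4 : 0 ≤ ∑ j ∈ Finset.univ.erase i, b j := Finset.sum_nonneg fun j _ => hb j
    nlinarith [hb i, hb1 i]
  have hP : ∑ i, a i ^ 2 ≤ 1 :=
    (Finset.sum_sq_le_sq_sum_of_nonneg fun j _ => ha j).trans (by
      change S ^ 2 ≤ 1
      nlinarith)
  have hQ1 : 0 ≤ 1 - Q := by
    have : Q ≤ (∑ i, b i) ^ 2 := Finset.sum_sq_le_sq_sum_of_nonneg fun j _ => hb j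
    have h0 : 0 ≤ ∑ i, b i := Finset.sum_nonneg fun i _ => hb i
    nlinarith
  -- condition on `(X, X') = (i, k)`: off the diagonal bound the probability of exactly one equality by `1`,
  -- on the diagonal by `P(Y ≠ Y') = 1 - Q`
  have key : ∑ i, ∑ k, a i * a k * (b i + b k - 2 * b i * b k)
      ≤ ∑ i, ∑ k, (a i * a k + if i = k then a i ^ 2 * (1 - Q) - a i ^ 2 else 0) := by
    refine Finset.sum_le_sum fun i _ => Finset.sum_le_sum fun k _ => ?_
    split_ifs with hik
    · subst hik
      nlinarith [mul_le_mul_of_nonneg_left (hQi i) (sq_nonneg (a i))]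
    · have : b i + b k - 2 * b i * b k ≤ 1 := by
        nlinarith [mul_nonneg (sub_nonneg.2 (hb1 i)) (sub_nonneg.2 (hb1 k)),
          mul_nonneg (hb i) (hb k)]
      nlinarith [mul_nonneg (ha i) (ha k)]
  have e1 : ∑ i, ∑ k, a i * a k * (b i + b k - 2 * b i * b k) = 2 * S * h - 2 * h ^ 2 := by
    have h1 : S * h = ∑ i, ∑ k, a i * (a k * b k) := Finset.sum_mul_sum _ _ _ _
    have h2 : h * S = ∑ i, ∑ k, a i * b i * a k := Finset.sum_mul_sum _ _ _ _
    have h3 : h * h = ∑ i, ∑ k, a i * b i * (a k * b k) := Finset.sum_mul_sum _ _ _ _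
    have : 2 * S * h - 2 * h ^ 2 = S * h + h * S - 2 * (h * h) := by ring
    rw [this, h1, h2, h3]
    simp only [Finset.mul_sum, ← Finset.sum_add_distrib, ← Finset.sum_sub_distrib]
    refine Finset.sum_congr rfl fun i _ => Finset.sum_congr rfl fun k _ => ?_
    ring
  have e2 : ∑ i, ∑ k, (a i * a k + if i = k then a i ^ 2 * (1 - Q) - a i ^ 2 else 0)
      = S ^ 2 + (∑ i, a i ^ 2) * (1 - Q) - ∑ i, a i ^ 2 := by
    simp only [Finset.sum_add_distrib, Finset.sum_ite_eq, Finset.mem_univ, if_true,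
      Finset.sum_sub_distrib, ← Finset.sum_mul, ← Finset.mul_sum]
    rw [← hSdef]; ring
  rw [e1, e2] at key
  nlinarith [mul_le_mul_of_nonneg_right hP hQ1]

/-- The left side is `∑ i, ∑ j, p i * q j * (u i * v j - v i * u j)`. Diagonal terms vanish and the
minors are at most `1` in absolute value, so only `∑_{i ≠ j} |p i| |q j| ≤ 1 - h` remains. -/
lemma wedge_le {ι : Type*} [Fintype ι] (p q u v : ι → ℝ) (hp : ∑ i, |p i| ≤ 1)
    (hq : ∑ i, |q i| ≤ 1) (hu : ∑ i, u i ^ 2 = 1) (hv : ∑ i, v i ^ 2 = 1) :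
    (∑ i, p i * u i) * (∑ i, q i * v i) - (∑ i, p i * v i) * (∑ i, q i * u i)
      ≤ 1 - ∑ i, |p i| * |q i| := by
  classical
  have hpair : ∀ f : ι → ℝ, ∑ i, f i ^ 2 = 1 → ∀ i j, i ≠ j → f i ^ 2 + f j ^ 2 ≤ 1 := by
    intro f hf i j hij
    rw [← hf, ← Finset.sum_pair (f := fun k => f k ^ 2) hij]
    exact Finset.sum_le_sum_of_subset_of_nonneg (Finset.subset_univ _) fun k _ _ => sq_nonneg _
  have hminor : ∀ i j, i ≠ j → |u i * v j - v i * u j| ≤ 1 := by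
    intro i j hij
    rw [abs_le_one_iff_mul_self_le_one]
    nlinarith [hpair u hu i j hij, hpair v hv i j hij, sq_nonneg (u i * v i + u j * v j),
      mul_le_mul (hpair u hu i j hij) (hpair v hv i j hij) (by positivity) zero_le_one]
  have hST : (∑ i, |p i|) * (∑ i, |q i|) ≤ 1 :=
    mul_le_one₀ hp (Finset.sum_nonneg fun i _ => abs_nonneg _) hq
  have key : ∑ i, ∑ j, (p i * u i * (q j * v j) - p i * v i * (q j * u j)) ≤
      ∑ i, ∑ j, (|p i| * |q j| - if i = j then |p i| * |q i| else 0) := by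
    refine Finset.sum_le_sum fun i _ => Finset.sum_le_sum fun j _ => ?_
    split_ifs with hij
    · subst hij
      linarith
    · have e : p i * u i * (q j * v j) - p i * v i * (q j * u j)
          = (p i * q j) * (u i * v j - v i * u j) := by ring
      rw [e, sub_zero, ← abs_mul]
      refine (le_abs_self _).trans ?_
      rw [abs_mul]
      exact mul_le_of_le_one_right (abs_nonneg _) (hminor i j hij)
  simp only [Finset.sum_sub_distrib, Finset.sum_ite_eq, Finset.mem_univ, if_true] at key
  rw [← Finset.sum_mul_sum, ← Finset.sum_mul_sum, ← Finset.sum_mul_sum] at key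
  linarith

/-! ### The bound for distances larger than `1/√2` -/

/-- The elementary inequality behind `cone_chord_le`: eliminating `X` leaves a quadratic in `m`, and
`L` is largest at its vertex. -/
lemma cone_arith {c t s m L X : ℝ} (hc0 : 0 < c) (hk : 0 < 2 * c ^ 2 - 1) (htc : t ≤ c)
    (hs : s ^ 2 = 1 - c ^ 2) (hX : 0 ≤ X) (hcX : c * X ≤ 2 * (c - t) + s * m)
    (hLX : (2 * c ^ 2 - 1) * L ^ 2 + m ^ 2 ≤ X ^ 2) : L * (2 * c ^ 2 - 1) ≤ 2 * (c - t) := by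
  obtain ⟨k, hkdef⟩ : ∃ k, k = 2 * c ^ 2 - 1 := ⟨_, rfl⟩
  rw [← hkdef] at hk hLX ⊢
  have h3 : c ^ 2 * (k * L ^ 2 + m ^ 2) ≤ (2 * (c - t) + s * m) ^ 2 := by
    refine le_trans ?_ (pow_le_pow_left₀ (mul_nonneg hc0.le hX) hcX 2)
    rw [mul_pow]
    exact mul_le_mul_of_nonneg_left hLX (sq_nonneg _)
  have h4 : c ^ 2 * (L * k) ^ 2 ≤ c ^ 2 * (2 * (c - t)) ^ 2 := by
    have e2 : c ^ 2 = k + s ^ 2 := by linarith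
    have h5 : k * (c ^ 2 * (k * L ^ 2 + m ^ 2)) ≤ k * (2 * (c - t) + s * m) ^ 2 :=
      mul_le_mul_of_nonneg_left h3 hk.le
    -- complete the square in `m`
    have h6 : c ^ 2 * (2 * (c - t)) ^ 2 - c ^ 2 * (L * k) ^ 2 =
        k * (2 * (c - t) + s * m) ^ 2 - k * (c ^ 2 * (k * L ^ 2 + m ^ 2))
        + (k * m - s * (2 * (c - t))) ^ 2 := by
      rw [e2]; ring
    linarith [sq_nonneg (k * m - s * (2 * (c - t)))]
  have h7 : (L * k) ^ 2 ≤ (2 * (c - t)) ^ 2 := le_of_mul_le_mul_left h4 (by positivity)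
  exact (le_abs_self _).trans (abs_le_of_sq_le_sq h7 (by linarith))

/-- A chord of the circular cone with apex `e`, axis `-e` and half-angle `π / 4`, lying in the
hyperplane `⟪v, ·⟫ = t`, has length at most `2 (c - t) / (2 c² - 1)`, where `c = ⟪v, e⟫`. -/
lemma cone_chord_le {E : Type*} [NormedAddCommGroup E] [InnerProductSpace ℝ E] {e v p q : E}
    {c t : ℝ} (he : ‖e‖ = 1) (hv : ‖v‖ = 1) (hc : inner ℝ v e = c) (hc0 : 0 < c)
    (hk : 0 < 2 * c ^ 2 - 1) (htc : t ≤ c) (hp : inner ℝ v p = t) (hq : inner ℝ v q = t)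
    (hpc : ‖p - (inner ℝ e p) • e‖ ≤ 1 - inner ℝ e p)
    (hqc : ‖q - (inner ℝ e q) • e‖ ≤ 1 - inner ℝ e q) :
    ‖p - q‖ * (2 * c ^ 2 - 1) ≤ 2 * (c - t) := by
  set x := inner ℝ e p with hx
  set x' := inner ℝ e q with hx'
  set y := p - x • e with hy
  set y' := q - x' • e with hy'
  set w := v - c • e with hw
  have hee : inner ℝ e e = (1:ℝ) := by rw [real_inner_self_eq_norm_sq, he]; norm_num
  have hvv : inner ℝ v v = (1:ℝ) := by rw [real_inner_self_eq_norm_sq, hv]; norm_num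
  have hev : inner ℝ e v = c := by rw [real_inner_comm, hc]
  have hey : inner ℝ e y = 0 := by
    rw [hy, inner_sub_right, inner_smul_right, hee, ← hx]; ring
  have hey' : inner ℝ e y' = 0 := by
    rw [hy', inner_sub_right, inner_smul_right, hee, ← hx']; ring
  have hwy : inner ℝ w y = t - x * c := by
    rw [hw, inner_sub_left, inner_smul_left, hey, hy, inner_sub_right, inner_smul_right, hp, hc]
    simp
  have hwy' : inner ℝ w y' = t - x' * c := by
    rw [hw, inner_sub_left, inner_smul_left, hey', hy', inner_sub_right, inner_smul_right, hq, hc]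
    simp
  have hww : ‖w‖ ^ 2 = 1 - c ^ 2 := by
    rw [← real_inner_self_eq_norm_sq, hw]
    simp only [inner_sub_left, inner_sub_right, inner_smul_left, inner_smul_right, hee, hvv, hev,
      hc]
    simp; ring
  set d := ‖y - y'‖ with hd
  set m := ‖y + y'‖ with hm
  have hL : ‖p - q‖ ^ 2 = (x - x') ^ 2 + d ^ 2 := by
    have e1 : p - q = (x - x') • e + (y - y') := by rw [hy, hy', sub_smul]; abel
    have e2 : inner ℝ ((x - x') • e) (y - y') = 0 := by
      rw [inner_smul_left, inner_sub_right, hey, hey']; simp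
    rw [e1, norm_add_sq_real, e2, norm_smul, he, Real.norm_eq_abs, mul_one, sq_abs]; ring
  have hpar : d ^ 2 + m ^ 2 = 2 * ‖y‖ ^ 2 + 2 * ‖y'‖ ^ 2 := by
    have := parallelogram_law_with_norm ℝ y y'
    rw [← hd, ← hm] at this
    nlinarith
  have hy2 : ‖y‖ ^ 2 ≤ (1 - x) ^ 2 := pow_le_pow_left₀ (norm_nonneg _) hpc 2
  have hy2' : ‖y'‖ ^ 2 ≤ (1 - x') ^ 2 := pow_le_pow_left₀ (norm_nonneg _) hqc 2
  have hX : 0 ≤ 1 - x := (norm_nonneg _).trans hpc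
  have hX' : 0 ≤ 1 - x' := (norm_nonneg _).trans hqc
  -- Cauchy–Schwarz for `⟪w, y - y'⟫` here and for `⟪w, y + y'⟫` in the next step; these two bounds
  -- and the parallelogram law suffice
  have hdiff : c ^ 2 * (x - x') ^ 2 ≤ (1 - c ^ 2) * d ^ 2 := by
    have h1 : inner ℝ w (y - y') = -(c * (x - x')) := by
      rw [inner_sub_right, hwy, hwy']; ring
    have h2 := abs_real_inner_le_norm w (y - y')
    rw [h1] at h2
    have h3 := pow_le_pow_left₀ (abs_nonneg _) h2 2
    rw [sq_abs, mul_pow, hww] at h3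
    linarith [h3]
  have hsum : c * (2 - x - x') ≤ 2 * (c - t) + ‖w‖ * m := by
    have h1 : inner ℝ w (y + y') = 2 * t - (x + x') * c := by
      rw [inner_add_right, hwy, hwy']; ring
    have h2 := real_inner_le_norm w (y + y')
    rw [h1] at h2
    linarith
  have h1 : (x - x') ^ 2 ≤ (1 - c ^ 2) * ‖p - q‖ ^ 2 := by rw [hL]; linarith
  have h2 : (2 * c ^ 2 - 1) * ‖p - q‖ ^ 2 + m ^ 2 ≤ (2 - x - x') ^ 2 := by nlinarith
  exact cone_arith hc0 hk htc hww (by linarith) hsum h2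

/-- The bound `L (t + √(1 - t²)) ≤ 2` for two points at distance `L = a - b` of a line at distance
`t` from the origin. For `t ≤ 1/√2` it is sharp. -/
lemma chord_le_of_l1 {ι : Type*} [Fintype ι] (x u : ι → ℝ) {t a b : ℝ}
    (ht0 : 0 ≤ t) (ht1 : t ≤ 1) (hu : ∑ i, u i ^ 2 = 1) (hxu : ∑ i, x i * u i = 0)
    (hx : ∑ i, x i ^ 2 = t ^ 2) (ha : ∑ i, |x i + a * u i| ≤ 1)
    (hb : ∑ i, |x i + b * u i| ≤ 1) :
    (a - b) * (t + √(1 - t ^ 2)) ≤ 2 := by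
  set p : ι → ℝ := fun i => x i + a * u i with hp
  set q : ι → ℝ := fun i => x i + b * u i with hq
  set h := ∑ i, |p i| * |q i| with hh
  have hh0 : 0 ≤ h := Finset.sum_nonneg fun i _ => by positivity
  have hh1 : h ≤ 1 := by
    have := wedge_le p q u u ha hb hu hu
    linarith
  have hpu : ∀ r, ∑ i, (x i + r * u i) * u i = r := by
    intro r
    have : ∑ i, (x i + r * u i) * u i = ∑ i, x i * u i + r * ∑ i, u i ^ 2 := by
      rw [Finset.mul_sum, ← Finset.sum_add_distrib]
      exact Finset.sum_congr rfl fun i _ => by ring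
    rw [this, hxu, hu]; ring
  have hpx : ∀ r, ∑ i, (x i + r * u i) * (x i / t) = t := by
    intro r
    have : ∑ i, (x i + r * u i) * (x i / t) = (∑ i, x i ^ 2 + r * ∑ i, x i * u i) / t := by
      rw [Finset.mul_sum, ← Finset.sum_add_distrib, Finset.sum_div]
      exact Finset.sum_congr rfl fun i _ => by ring
    rw [this, hxu, hx, mul_zero, add_zero, pow_two, mul_self_div_self]
  -- for `t = 0` the vector `x / t` is not a unit vector, but then the claim is just `h ≤ 1`
  have htL : t * (a - b) ≤ 1 - h := by
    rcases ht0.eq_or_lt with h0 | hpos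
    · rw [← h0]; linarith
    · have hv : ∑ i, (x i / t) ^ 2 = 1 := by
        simp only [div_pow]
        rw [← Finset.sum_div, hx, div_self (by positivity)]
      have := wedge_le p q u (fun i => x i / t) ha hb hu hv
      rw [hpu, hpx, hpx, hpu] at this
      linarith
  have hL : (a - b) ^ 2 ≤ 2 + 2 * h ^ 2 := by
    have h1 := sum_sq_add_sq_le (fun i => |p i|) (fun i => |q i|) (fun i => abs_nonneg _)
      (fun i => abs_nonneg _) ha hb
    have h2 : (a - b) ^ 2 = ∑ i, (p i - q i) ^ 2 := by
      have : ∀ i, (p i - q i) ^ 2 = (a - b) ^ 2 * u i ^ 2 := fun i => by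
        simp only [hp, hq]; ring
      simp only [this]
      rw [← Finset.mul_sum, hu, mul_one]
    have h3 : ∑ i, (p i - q i) ^ 2 ≤
        ∑ i, |p i| ^ 2 + ∑ i, |q i| ^ 2 + 2 * ∑ i, |p i| * |q i| := by
      rw [Finset.mul_sum, ← Finset.sum_add_distrib, ← Finset.sum_add_distrib]
      refine Finset.sum_le_sum fun i _ => ?_
      rw [sq_abs, sq_abs, ← abs_mul]
      nlinarith [neg_abs_le (p i * q i)]
    linarith
  have h4 : 0 ≤ 1 - t ^ 2 := by nlinarith
  have h5 : ((a - b) * √(1 - t ^ 2)) ^ 2 ≤ (2 - t * (a - b)) ^ 2 := by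
    rw [mul_pow, Real.sq_sqrt h4]
    nlinarith
  have h6 := abs_le_of_sq_le_sq h5 (by linarith)
  linarith [(le_abs_self _).trans h6]

/-- Here `c` is the largest absolute value of a coordinate of the unit vector `x / t`, and the
cross-polytope is enclosed in the cone of `cone_chord_le` at the corresponding vertex. -/
lemma exists_chord_le {n : ℕ} (hn : 2 ≤ n) {x u : EuclideanSpace ℝ (Fin n)} {t a b : ℝ}
    (ht : 1 / √2 < t) (hu : ‖u‖ = 1) (hxu : inner ℝ x u = 0) (hx : ‖x‖ = t)
    (ha : ∑ i, |x i + a * u i| ≤ 1) (hb : ∑ i, |x i + b * u i| ≤ 1) (hab : b ≤ a) :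
    ∃ c, t ≤ c ∧ c ≤ 1 ∧ (a - b) * (2 * c ^ 2 - 1) ≤ 2 * (c - t) := by
  have ht0 : 0 < t := lt_trans (by positivity) ht
  have ht2 : 1 / 2 < t ^ 2 := by
    have := pow_lt_pow_left₀ ht (by positivity) two_ne_zero
    rwa [div_pow, Real.sq_sqrt zero_le_two, one_pow] at this
  set v : EuclideanSpace ℝ (Fin n) := t⁻¹ • x with hvdef
  have hv : ‖v‖ = 1 := by
    rw [hvdef, norm_smul, hx, Real.norm_eq_abs, abs_of_pos (by positivity), inv_mul_cancel₀ ht0.ne']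
  have hvp : ∀ r : ℝ, inner ℝ v (x + r • u) = t := by
    intro r
    rw [hvdef, inner_smul_left, inner_add_right, inner_smul_right, hxu,
      real_inner_self_eq_norm_sq, hx]
    simp; field_simp
  have : Nonempty (Fin n) := ⟨⟨0, by omega⟩⟩
  obtain ⟨i, -, hi⟩ := Finset.exists_max_image Finset.univ (fun i => |v i|) Finset.univ_nonempty
  have hti : t ≤ |v i| := by
    have h1 : t = ∑ j, (x j + a * u j) * v j := by
      have := hvp a
      rw [PiLp.inner_apply] at this
      rw [← this]
      simp
    have h2 : ∑ j, (x j + a * u j) * v j ≤ ∑ j, |x j + a * u j| * |v i| := by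
      refine Finset.sum_le_sum fun j _ => (le_abs_self _).trans ?_
      rw [abs_mul]
      exact mul_le_mul_of_nonneg_left (hi j (Finset.mem_univ _)) (abs_nonneg _)
    rw [← Finset.sum_mul] at h2
    nlinarith [abs_nonneg (v i)]
  have hi1 : |v i| ≤ 1 := by
    rw [← hv]; exact PiLp.norm_apply_le v i
  -- the sign for which `σ e_i` is the vertex on the side of `v`
  obtain ⟨σ, hσ, hσv⟩ : ∃ σ : ℝ, |σ| = 1 ∧ σ * v i = |v i| := by
    rcases abs_choice (v i) with h | h
    · exact ⟨1, by simp, by rw [h]; ring⟩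
    · exact ⟨-1, by simp, by rw [h]; ring⟩
  have hσ2 : σ * σ = 1 := by rw [← abs_mul_abs_self, hσ]; norm_num
  set e : EuclideanSpace ℝ (Fin n) := EuclideanSpace.single i σ with hedef
  have he : ‖e‖ = 1 := by rw [hedef]; simpa using hσ
  have hep : ∀ y : EuclideanSpace ℝ (Fin n), inner ℝ e y = σ * y i := by
    intro y; rw [hedef, EuclideanSpace.inner_single_left]; simp
  have hcone : ∀ y : EuclideanSpace ℝ (Fin n), ∑ j, |y j| ≤ 1 →
      ‖y - (inner ℝ e y) • e‖ ≤ 1 - inner ℝ e y := by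
    intro y hy
    have h1 : ∑ j, |y j| = |y i| + ∑ j ∈ Finset.univ.erase i, |y j| :=
      (Finset.add_sum_erase _ _ (Finset.mem_univ i)).symm
    have h2 : σ * y i ≤ |y i| := by
      refine (le_abs_self _).trans ?_
      rw [abs_mul, hσ, one_mul]
    have h3 : ‖y - (inner ℝ e y) • e‖ ^ 2 = ∑ j ∈ Finset.univ.erase i, |y j| ^ 2 := by
      rw [EuclideanSpace.norm_sq_eq, ← Finset.add_sum_erase _ _ (Finset.mem_univ i)]
      have h4 : (y - (inner ℝ e y) • e) i = 0 := by
        rw [hep]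
        simp only [PiLp.sub_apply, PiLp.smul_apply, hedef, PiLp.single_apply, if_true,
          smul_eq_mul]
        linear_combination (-y i) * hσ2
      rw [h4, norm_zero, zero_pow two_ne_zero, zero_add]
      refine Finset.sum_congr rfl fun j hj => ?_
      have hji : j ≠ i := Finset.ne_of_mem_erase hj
      simp [hedef, hji]
    have h5 : ∑ j ∈ Finset.univ.erase i, |y j| ^ 2 ≤ (∑ j ∈ Finset.univ.erase i, |y j|) ^ 2 :=
      Finset.sum_sq_le_sq_sum_of_nonneg fun j _ => abs_nonneg _
    have h6 : 0 ≤ ∑ j ∈ Finset.univ.erase i, |y j| := Finset.sum_nonneg fun j _ => abs_nonneg _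
    rw [← h3] at h5
    have h7 := abs_le_of_sq_le_sq h5 h6
    have h8 := hep y
    linarith [(le_abs_self _).trans h7]
  refine ⟨|v i|, hti, hi1, ?_⟩
  have h := cone_chord_le (e := e) (v := v) (p := x + a • u) (q := x + b • u) (c := |v i|) (t := t)
    he hv (by rw [real_inner_comm, hep, hσv]) (by linarith) (by nlinarith) hti (hvp a) (hvp b)
    (hcone _ (by simpa using ha)) (hcone _ (by simpa using hb))
  have h8 : ‖x + a • u - (x + b • u)‖ = a - b := by
    rw [add_sub_add_left_eq_sub, ← sub_smul, norm_smul, hu, mul_one, Real.norm_eq_abs,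
      abs_of_nonneg (by linarith)]
  rwa [h8] at h

/-! ### Parametrised lines and the measure of chords -/

lemma infDist_eq_norm_foot {E : Type*} [NormedAddCommGroup E] [InnerProductSpace ℝ E] {x u : E}
    (hxu : inner ℝ x u = 0) : infDist 0 (range fun s : ℝ => x + s • u) = ‖x‖ := by
  apply le_antisymm
  · refine (infDist_le_dist_of_mem (mem_range_self (0 : ℝ))).trans ?_
    simp
  · refine (le_infDist (range_nonempty _)).2 ?_
    rintro _ ⟨s, rfl⟩
    rw [dist_zero_left]
    have h : ‖x + s • u‖ ^ 2 = ‖x‖ ^ 2 + ‖s • u‖ ^ 2 := by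
      rw [norm_add_sq_real, inner_smul_right, hxu]; ring
    exact le_of_sq_le_sq (by rw [h]; nlinarith [sq_nonneg ‖s • u‖]) (norm_nonneg _)

/-- Every line is parametrised by arc length from the foot `x` of the perpendicular through the
origin. -/
lemma exists_line_param {E : Type*} [NormedAddCommGroup E] [InnerProductSpace ℝ E]
    {ℓ : AffineSubspace ℝ E} (hℓ : Module.finrank ℝ ℓ.direction = 1) :
    ∃ x u : E, ‖u‖ = 1 ∧ inner ℝ x u = 0 ∧ (ℓ : Set E) = range fun s : ℝ => x + s • u := by
  have hne : (ℓ : Set E).Nonempty := by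
    rw [AffineSubspace.nonempty_iff_ne_bot]
    rintro rfl
    rw [AffineSubspace.direction_bot, finrank_bot] at hℓ
    exact zero_ne_one hℓ
  obtain ⟨z, hz⟩ := hne
  obtain ⟨⟨w, hw⟩, hw0, hspan⟩ := finrank_eq_one_iff'.1 hℓ
  have hw0 : w ≠ 0 := fun h => hw0 (Subtype.ext h)
  have hn : ‖w‖ ≠ 0 := norm_ne_zero_iff.2 hw0
  set u := ‖w‖⁻¹ • w with hu
  have hu1 : ‖u‖ = 1 := norm_smul_inv_norm hw0
  have hud : u ∈ ℓ.direction := ℓ.direction.smul_mem _ hw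
  refine ⟨z - (inner ℝ z u) • u, u, hu1, ?_, ?_⟩
  · rw [inner_sub_left, inner_smul_left, real_inner_self_eq_norm_sq, hu1]; simp
  · ext y
    constructor
    · intro hy
      obtain ⟨c, hc⟩ := hspan ⟨y - z, AffineSubspace.vsub_mem_direction hy hz⟩
      have hc' : c • w = y - z := congrArg Subtype.val hc
      refine ⟨inner ℝ z u + c * ‖w‖, ?_⟩
      have : (c * ‖w‖) • u = y - z := by
        rw [hu, smul_smul, mul_assoc, mul_inv_cancel₀ hn, mul_one, hc']
      simp only [add_smul, this]
      abel
    · rintro ⟨s, rfl⟩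
      have := AffineSubspace.vadd_mem_of_mem_direction
        (ℓ.direction.smul_mem (s - inner ℝ z u) hud) hz
      have e : (z - (inner ℝ z u) • u) + s • u = (s - inner ℝ z u) • u +ᵥ z := by
        rw [vadd_eq_add, sub_smul]; abel
      rw [← e] at this
      exact this

lemma hausdorffMeasure_chord {n : ℕ} {x u : EuclideanSpace ℝ (Fin n)} (hu : ‖u‖ = 1) :
    μH[1] ({y : EuclideanSpace ℝ (Fin n) | ∑ i, |y i| ≤ 1} ∩ range fun s : ℝ => x + s • u)
      = volume {s : ℝ | ∑ i, |x i + s * u i| ≤ 1} := by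
  have hf : Isometry fun s : ℝ => x + s • u := by
    refine Isometry.of_dist_eq fun a b => ?_
    rw [dist_add_left, dist_eq_norm, ← sub_smul, norm_smul, hu, mul_one, Real.dist_eq,
      Real.norm_eq_abs]
  rw [← image_preimage_eq_inter_range, hf.hausdorffMeasure_image (Or.inl zero_le_one),
    hausdorffMeasure_real]
  simp

lemma convex_chord {ι : Type*} [Fintype ι] (x u : ι → ℝ) :
    Convex ℝ {s : ℝ | ∑ i, |x i + s * u i| ≤ 1} := by
  intro a ha b hb α β hα hβ hαβ
  have h : ∑ i, |x i + (α • a + β • b) * u i| ≤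
      α * ∑ i, |x i + a * u i| + β * ∑ i, |x i + b * u i| := by
    rw [Finset.mul_sum, Finset.mul_sum, ← Finset.sum_add_distrib]
    refine Finset.sum_le_sum fun i _ => ?_
    have e : x i + (α • a + β • b) * u i = α * (x i + a * u i) + β * (x i + b * u i) := by
      simp only [smul_eq_mul]; linear_combination (-x i) * hαβ
    rw [e]
    refine (abs_add_le _ _).trans ?_
    rw [abs_mul, abs_mul, abs_of_nonneg hα, abs_of_nonneg hβ]
  simp only [mem_ofPred_eq] at ha hb ⊢
  nlinarith

/-! ### Extremal lines -/

/-- The points with parameters `a` and `b` on the line `s ↦ t v + s u` in the plane of the first two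
coordinates, where `v = (c, s)` and `u = (-s, c)`. If both lie in the cross-polytope, then this line
has a chord of length at least `a - b`. -/
lemma exists_planar_chord {n : ℕ} (hn : 2 ≤ n) {c s t a b : ℝ} (ht : 0 ≤ t)
    (hcs : c ^ 2 + s ^ 2 = 1) (ha : |t * c - a * s| + |t * s + a * c| ≤ 1)
    (hb : |t * c - b * s| + |t * s + b * c| ≤ 1) :
    ∃ ℓ : AffineSubspace ℝ (EuclideanSpace ℝ (Fin n)),
      Module.finrank ℝ ℓ.direction = 1 ∧
      infDist 0 (ℓ : Set (EuclideanSpace ℝ (Fin n))) = t ∧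
      ENNReal.ofReal (a - b) ≤
        μH[1] ({x : EuclideanSpace ℝ (Fin n) | ∑ i, |x i| ≤ 1} ∩ ℓ) := by
  obtain ⟨m, rfl⟩ : ∃ m, n = m + 2 := ⟨n - 2, by omega⟩
  set x : EuclideanSpace ℝ (Fin (m + 2)) :=
    WithLp.toLp 2 (Fin.cons (t * c) (Fin.cons (t * s) fun _ => 0)) with hx
  set u : EuclideanSpace ℝ (Fin (m + 2)) :=
    WithLp.toLp 2 (Fin.cons (-s) (Fin.cons c fun _ => 0)) with hu
  have hu1 : ‖u‖ = 1 := by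
    rw [EuclideanSpace.norm_eq, Real.sqrt_eq_one, Fin.sum_univ_succ, Fin.sum_univ_succ]
    simp [hu]; linarith
  have hx1 : ‖x‖ = t := by
    have h : ‖x‖ ^ 2 = t ^ 2 := by
      rw [EuclideanSpace.norm_sq_eq, Fin.sum_univ_succ, Fin.sum_univ_succ]
      simp [hx, mul_pow]
      linear_combination t ^ 2 * hcs
    exact (pow_left_inj₀ (norm_nonneg _) ht two_ne_zero).1 h
  have hxu : inner ℝ x u = 0 := by
    rw [PiLp.inner_apply, Fin.sum_univ_succ, Fin.sum_univ_succ]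
    simp [hx, hu]; ring
  have hmem : ∀ r, |t * c - r * s| + |t * s + r * c| ≤ 1 → ∑ i, |x i + r * u i| ≤ 1 := by
    intro r hr
    rw [Fin.sum_univ_succ, Fin.sum_univ_succ]
    simp [hx, hu]
    simpa [sub_eq_add_neg] using hr
  have hcoe : ((AffineSubspace.mk' x (Submodule.span ℝ {u}) :
      AffineSubspace ℝ (EuclideanSpace ℝ (Fin (m + 2)))) : Set (EuclideanSpace ℝ (Fin (m + 2))))
      = range fun s : ℝ => x + s • u := by
    ext y
    simp only [SetLike.mem_coe, AffineSubspace.mem_mk', Submodule.mem_span_singleton, mem_range,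
      vsub_eq_sub, eq_sub_iff_add_eq, add_comm x]
  refine ⟨AffineSubspace.mk' x (Submodule.span ℝ {u}), ?_, ?_, ?_⟩
  · rw [AffineSubspace.direction_mk']
    exact finrank_span_singleton fun h => by simp [h] at hu1
  · rw [hcoe, infDist_eq_norm_foot hxu, hx1]
  · rw [hcoe, hausdorffMeasure_chord hu1, ← Real.volume_Icc]
    exact measure_mono ((convex_chord x u).ordConnected.out (hmem b hb) (hmem a ha))

/-- The line in the plane of the first two coordinates with unit normal `(c, √(1 - c²))` meets the
two sides adjacent to the vertex `(1, 0)`; its chord attains the bound of `cone_chord_le`. -/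
lemma exists_corner_chord {n : ℕ} (hn : 2 ≤ n) {c t : ℝ} (ht : 1 / 2 < t ^ 2) (ht0 : 0 ≤ t)
    (htc : t ≤ c) (hc1 : c ≤ 1) :
    ∃ ℓ : AffineSubspace ℝ (EuclideanSpace ℝ (Fin n)),
      Module.finrank ℝ ℓ.direction = 1 ∧
      infDist 0 (ℓ : Set (EuclideanSpace ℝ (Fin n))) = t ∧
      ENNReal.ofReal (2 * (c - t) / (2 * c ^ 2 - 1)) ≤
        μH[1] ({x : EuclideanSpace ℝ (Fin n) | ∑ i, |x i| ≤ 1} ∩ ℓ) := by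
  set s := √(1 - c ^ 2) with hs
  have hs0 : 0 ≤ s := Real.sqrt_nonneg _
  have hcs : c ^ 2 + s ^ 2 = 1 := by rw [hs, Real.sq_sqrt (by nlinarith)]; ring
  have hst : s < t := by nlinarith
  have h1 : 0 < c - s := by linarith
  have h2 : 0 < c + s := by linarith
  -- the endpoints are `(1 - y, y)` and `(1 - y', -y')`
  obtain ⟨y, ey, hy0, hy1⟩ : ∃ y, y * (c - s) = c - t ∧ 0 ≤ y ∧ y ≤ 1 :=
    ⟨(c - t) / (c - s), div_mul_cancel₀ _ h1.ne', div_nonneg (by linarith) h1.le,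
      (div_le_one h1).2 (by linarith)⟩
  obtain ⟨y', ey', hy0', hy1'⟩ : ∃ y', y' * (c + s) = c - t ∧ 0 ≤ y' ∧ y' ≤ 1 :=
    ⟨(c - t) / (c + s), div_mul_cancel₀ _ h2.ne', div_nonneg (by linarith) h2.le,
      (div_le_one h2).2 (by linarith)⟩
  obtain ⟨ℓ, hd, hdist, hlen⟩ := exists_planar_chord hn (c := c) (s := s) (t := t)
    (a := y * c - (1 - y) * s) (b := -y' * c - (1 - y') * s) ht0 hcs
    (by
      have e1 : t * c - (y * c - (1 - y) * s) * s = 1 - y := by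
        linear_combination (1 - y) * hcs + c * ey
      have e2 : t * s + (y * c - (1 - y) * s) * c = y := by
        linear_combination y * hcs + s * ey
      rw [e1, e2, abs_of_nonneg hy0, abs_of_nonneg (by linarith)]; linarith)
    (by
      have e1 : t * c - (-y' * c - (1 - y') * s) * s = 1 - y' := by
        linear_combination (1 - y') * hcs + c * ey'
      have e2 : t * s + (-y' * c - (1 - y') * s) * c = -y' := by
        linear_combination (-y') * hcs + s * ey'
      rw [e1, e2, abs_neg, abs_of_nonneg hy0', abs_of_nonneg (by linarith)]; linarith)
  refine ⟨ℓ, hd, hdist, le_of_eq_of_le ?_ hlen⟩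
  congr 1
  have hk : 2 * c ^ 2 - 1 = (c - s) * (c + s) := by linear_combination hcs
  rw [hk, div_eq_iff (mul_pos h1 h2).ne']
  linear_combination (-(c + s) * (c + s)) * ey - (c - s) * (c - s) * ey' - 2 * (c - t) * hcs

/-! ### The maximal chord length -/

theorem stmt0 (n : ℕ) (hn : 2 ≤ n) (t : ℝ) (ht : t ∈ Set.Icc (0:ℝ) 1) :
    IsGreatest
      { L : ℝ≥0∞ | ∃ ℓ : AffineSubspace ℝ (EuclideanSpace ℝ (Fin n)),
          Module.finrank ℝ ℓ.direction = 1 ∧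
          Metric.infDist 0 (ℓ : Set (EuclideanSpace ℝ (Fin n))) = t ∧
          L = μH[1] ({x : EuclideanSpace ℝ (Fin n) | ∑ i, |x i| ≤ 1} ∩ ℓ) }
      (ENNReal.ofReal
        (if t ≤ 1 / Real.sqrt 2 then 2 / (t + Real.sqrt (1 - t ^ 2))
         else if t ≤ 3 / 4 then t - Real.sqrt (t ^ 2 - 1 / 2)
         else 2 - 2 * t)) := by
  obtain ⟨ht0, ht1⟩ := ht
  set F := (if t ≤ 1 / Real.sqrt 2 then 2 / (t + Real.sqrt (1 - t ^ 2))
         else if t ≤ 3 / 4 then t - Real.sqrt (t ^ 2 - 1 / 2)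
         else 2 - 2 * t) with hF
  have hsq : t ≤ 1 / √2 ↔ t ^ 2 ≤ 1 / 2 := by
    rw [← abs_of_nonneg ht0, ← abs_of_nonneg (by positivity : (0:ℝ) ≤ 1 / √2), ← sq_le_sq, div_pow,
      Real.sq_sqrt zero_le_two, one_pow, abs_of_nonneg ht0]
  -- the volume of a set of parameters is at most its diameter
  have upper : ∀ L ∈ { L : ℝ≥0∞ | ∃ ℓ : AffineSubspace ℝ (EuclideanSpace ℝ (Fin n)),
          Module.finrank ℝ ℓ.direction = 1 ∧
          Metric.infDist 0 (ℓ : Set (EuclideanSpace ℝ (Fin n))) = t ∧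
          L = μH[1] ({x : EuclideanSpace ℝ (Fin n) | ∑ i, |x i| ≤ 1} ∩ ℓ) },
      L ≤ ENNReal.ofReal F := by
    rintro _ ⟨ℓ, hℓ, hdist, rfl⟩
    obtain ⟨x, u, hu, hxu, hrange⟩ := exists_line_param hℓ
    rw [hrange, infDist_eq_norm_foot hxu] at hdist
    rw [hrange, hausdorffMeasure_chord hu]
    have main : ∀ a b : ℝ, b ≤ a → ∑ i, |x i + a * u i| ≤ 1 → ∑ i, |x i + b * u i| ≤ 1 →
        a - b ≤ F := by
      intro a b hab ha hb
      rw [hF]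
      split_ifs with h1 h2
      · have hpos : 0 < t + √(1 - t ^ 2) := by
          have := hsq.1 h1
          have : 0 < √(1 - t ^ 2) := Real.sqrt_pos.2 (by linarith)
          linarith
        rw [le_div_iff₀ hpos]
        refine chord_le_of_l1 x u ht0 ht1 ?_ ?_ ?_ ha hb
        · have h := EuclideanSpace.norm_sq_eq u
          simp only [hu, Real.norm_eq_abs, sq_abs, one_pow] at h
          exact h.symm
        · rw [← hxu, PiLp.inner_apply]
          exact Finset.sum_congr rfl fun i _ => by simp [mul_comm]
        · rw [← hdist, EuclideanSpace.norm_sq_eq]; simp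
      all_goals
        have ht2 : 1 / 2 < t ^ 2 := not_le.1 fun h => h1 (hsq.2 h)
        obtain ⟨c, htc, hc1, hc⟩ := exists_chord_le hn (not_le.1 h1) hu hxu hdist ha hb hab
        have hk : 0 < 2 * c ^ 2 - 1 := by nlinarith
        refine le_of_mul_le_mul_right (hc.trans ?_) hk
      · set r := √(t ^ 2 - 1 / 2) with hr
        have hr2 : r ^ 2 = t ^ 2 - 1 / 2 := Real.sq_sqrt (by linarith)
        have hr0 : 0 ≤ r := Real.sqrt_nonneg _
        have hrt : r ≤ t := by nlinarith
        have : (t - r) * (2 * c ^ 2 - 1) - 2 * (c - t) = 2 * (t - r) * (c - (t + r)) ^ 2 := by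
          -- the maximum over `c` is attained at `c = t + r`, a double root
          linear_combination (2 * (t + r) - 4 * c) * hr2
        nlinarith [mul_nonneg (sub_nonneg.2 hrt) (sq_nonneg (c - (t + r)))]
      · have : (2 - 2 * t) * (2 * c ^ 2 - 1) - 2 * (c - t)
            = 2 * ((1 - c) * ((2 * t - 1) - 2 * (1 - t) * c)) := by ring
        have h3 : 0 ≤ (2 * t - 1) - 2 * (1 - t) * c := by nlinarith
        nlinarith [mul_nonneg (sub_nonneg.2 hc1) h3]
    refine (Real.volume_le_diam _).trans (ediam_le fun a ha b hb => ?_)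
    rw [edist_dist, Real.dist_eq]
    refine ENNReal.ofReal_le_ofReal ?_
    rcases le_total b a with h | h
    · rw [abs_of_nonneg (by linarith)]; exact main a b h ha hb
    · rw [abs_sub_comm, abs_of_nonneg (by linarith)]; exact main b a h hb ha
  suffices lower : ∃ ℓ : AffineSubspace ℝ (EuclideanSpace ℝ (Fin n)),
      Module.finrank ℝ ℓ.direction = 1 ∧
      infDist 0 (ℓ : Set (EuclideanSpace ℝ (Fin n))) = t ∧
      ENNReal.ofReal F ≤ μH[1] ({x : EuclideanSpace ℝ (Fin n) | ∑ i, |x i| ≤ 1} ∩ ℓ) by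
    obtain ⟨ℓ, h1, h2, h3⟩ := lower
    exact ⟨⟨ℓ, h1, h2, le_antisymm h3 (upper _ ⟨ℓ, h1, h2, rfl⟩)⟩, upper⟩
  rw [hF]
  split_ifs with h1 h2
  · have ht2 := hsq.1 h1
    set k := √(1 - t ^ 2) with hk
    have hk2 : k ^ 2 = 1 - t ^ 2 := Real.sq_sqrt (by linarith)
    have hk0 : 0 < k := Real.sqrt_pos.2 (by linarith)
    have htk : t ≤ k := by nlinarith
    have hpos : 0 < t + k := by linarith
    have eL : 2 / (t + k) * (t + k) = 2 := div_mul_cancel₀ _ hpos.ne'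
    set L := 2 / (t + k) with hL
    have hL0 : 0 < L := by positivity
    -- the chord joins the vertex `(1, 0)` to `(1 - L k, L t)`
    have := exists_planar_chord hn (c := t) (s := k) (t := t) (a := L - k) (b := -k) ht0
      (by linarith)
      (by
        have e1 : t * t - (L - k) * k = 1 - L * k := by linear_combination hk2
        have e2 : t * k + (L - k) * t = L * t := by ring
        rw [e1, e2, abs_of_nonpos (by nlinarith), abs_of_nonneg (by positivity)]
        linarith)
      (by
        have e1 : t * t - -k * k = 1 := by linear_combination hk2
        have e2 : t * k + -k * t = 0 := by ring
        rw [e1, e2]; simp)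
    simpa using this
  · have ht2 : 1 / 2 < t ^ 2 := not_le.1 fun h => h1 (hsq.2 h)
    set r := √(t ^ 2 - 1 / 2) with hr
    have hr2 : r ^ 2 = t ^ 2 - 1 / 2 := Real.sq_sqrt (by linarith)
    have hr0 : 0 < r := Real.sqrt_pos.2 (by linarith)
    have hr1 : t + r ≤ 1 := by nlinarith
    have := exists_corner_chord hn (c := t + r) ht2 ht0 (by linarith) hr1
    have e : 2 * (t + r - t) / (2 * (t + r) ^ 2 - 1) = t - r := by
      rw [div_eq_iff (by nlinarith)]
      linear_combination 2 * (t + r) * hr2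
    rwa [e] at this
  · have ht2 : 1 / 2 < t ^ 2 := not_le.1 fun h => h1 (hsq.2 h)
    have := exists_corner_chord hn (c := 1) ht2 ht0 ht1 le_rfl
    convert this using 6
    norm_num
    ring
end

section
/- Let n ≥ 2 and t ∈ [0,1]. There exist indices i ≠ j and a line ℓ contained in the coordinate subspace span{e_i, e_j}, at distance t from the origin, such that the length |B_1^n ∩ ℓ| attains the maximum over all lines in ℝ^n at distance t from the origin; this maximal value is 2/(t + √(1−t²)) if t ∈ [0, 1/√2], t − √(t² − 1/2) if t ∈ (1/√2, 3/4], and 2 − 2t if t ∈ (3/4, 1]. -/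
open MeasureTheory Metric Set
open scoped ENNReal

/-!
Parametrise a line at distance `t` as `s ↦ p + s • u` with `‖u‖ = 1`, `p ⊥ u`, `‖p‖ = t`. The map is
an isometry, so the length of the section is the Lebesgue measure of the set of `s` with
`∑ |p k + s * u k| ≤ 1`, and it suffices to bound `s₂ - s₁` for two such parameters.

The idea is to enlarge the cross-polytope to the double cone `|x_k| + |x'|₂ ≤ 1` about a suitable
coordinate axis `e_k`, where `x'` collects the other coordinates (`coord_bound`). Membership of
`p + s • u` in this cone only involves `t`, `a = p k`, `b = u k` and `s`, because
`|x|² = t² + s²` on the line; and Cauchy-Schwarz gives `a² ≤ t² (1 - b²)` (`bessel`), with equality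
when the line lies in a plane through the axis, which meets the cone in a two-dimensional
cross-polytope. So the extremal lines of the cone are planar.

* If `2 t² ≤ 1`, put `r = √(1 - t²)`. Always `(s₂ - s₁) ‖u‖₁ ≤ 2`, which suffices when
  `‖u‖₁ ≥ t + r`. Otherwise the largest coordinate `c = |u k|` is at least `r` (`large_coord`), the
  line is steep with respect to the axis `e_k`, and `steep_bound` gives
  `(2 c² - 1) (s₂ - s₁) ≤ 2 (c - t)`; this is at most the claimed bound, with equality at `c = r`.
* If `2 t² > 1`, a point of the line in the cross-polytope has norm at least `t`, hence some
  coordinate with `|x_k| ≥ 1/2`. Near that tip the cone forces `t² ≤ |p k|` (`tip_height`), and with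
  `σ = √(1 - (u k)²)` `tip_bound` gives `(2 σ² - 1) |s₂ - s₁| ≤ 2 (σ - t)`. Maximising over
  `σ ∈ [t, 1]` (`tip_planar`) produces the remaining two branches, according to whether the critical
  point `σ = t + √(t² - 1/2)` is at most `1`.

`exists_planar_chord` exhibits planar lines attaining these values.
-/

/-! ### Chords of the double cone -/

/-- One end of a steep chord. For `x = p + s • u` in the nappe `|x'| ≤ 1 - x_k`, the difference
`e_k - x` is a future-directed causal vector of the Lorentz form `x_k² - |x'|²`, and
`c (1 - 2 a) - (2 c² - 1) s` is its Lorentz product with the future timelike vector `u`. It is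
therefore nonnegative, and the reverse Cauchy-Schwarz inequality bounds its square below. -/
lemma steep_end {t c σ a s : ℝ} (hc : 0 ≤ c) (hσ : 0 ≤ σ) (h1 : c ^ 2 + σ ^ 2 = 1)
    (hσc : σ ≤ c) (ha : a ^ 2 ≤ t ^ 2 * σ ^ 2) (hx : a + s * c ≤ 1)
    (hq : t ^ 2 + s ^ 2 - (a + s * c) ^ 2 ≤ (1 - (a + s * c)) ^ 2) :
    0 ≤ c * (1 - 2 * a) - (2 * c ^ 2 - 1) * s ∧
    σ ^ 2 + t ^ 2 * (1 - 2 * σ ^ 2) - 2 * a + 2 * a ^ 2 ≤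
      (c * (1 - 2 * a) - (2 * c ^ 2 - 1) * s) ^ 2 := by
  constructor
  · have e1 : (s - (a + s * c) * c) ^ 2 ≤ σ ^ 2 * (t ^ 2 + s ^ 2 - (a + s * c) ^ 2) := by
      have : σ ^ 2 * (t ^ 2 + s ^ 2 - (a + s * c) ^ 2) - (s - (a + s * c) * c) ^ 2
        = t ^ 2 * σ ^ 2 - a ^ 2 := by
        have hs : σ ^ 2 = 1 - c ^ 2 := by linarith
        rw [hs]; ring
      linarith
    have e2 : (s - (a + s * c) * c) ^ 2 ≤ ((1 - (a + s * c)) * σ) ^ 2 := by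
      calc _ ≤ _ := e1
        _ ≤ σ ^ 2 * (1 - (a + s * c)) ^ 2 := by gcongr
        _ = _ := by ring
    have e3 := abs_le_of_sq_le_sq e2 (mul_nonneg (by linarith) hσ)
    have e4 : (1 - (a + s * c)) * σ ≤ (1 - (a + s * c)) * c :=
      mul_le_mul_of_nonneg_left hσc (by linarith)
    nlinarith [(abs_le.1 e3).1]
  · have hA : 0 ≤ 2 * c ^ 2 - 1 := by nlinarith
    have := mul_nonneg hA (sub_nonneg.2 hq)
    have hs : σ ^ 2 = 1 - c ^ 2 := by linarith
    rw [hs]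
    nlinarith

/-- If `t ≤ 1 / √2` and the sine `σ` of the angle between the direction and the axis is at most `t`,
then a chord of the double cone at distance `t` is at most as long as the planar chord
with the same angle and the same distance `t`. -/
lemma steep_bound {t c σ a s₁ s₂ : ℝ} (ht : 0 ≤ t) (ht2 : 2 * t ^ 2 ≤ 1) (hc : 0 ≤ c)
    (hσ : 0 ≤ σ) (h1 : c ^ 2 + σ ^ 2 = 1) (hσt : σ ≤ t) (ha : a ^ 2 ≤ t ^ 2 * σ ^ 2)
    (hx₂ : |a + s₂ * c| ≤ 1)
    (hq₂ : t ^ 2 + s₂ ^ 2 - (a + s₂ * c) ^ 2 ≤ (1 - |a + s₂ * c|) ^ 2)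
    (hx₁ : |a + s₁ * c| ≤ 1)
    (hq₁ : t ^ 2 + s₁ ^ 2 - (a + s₁ * c) ^ 2 ≤ (1 - |a + s₁ * c|) ^ 2) :
    (2 * c ^ 2 - 1) * (s₂ - s₁) ≤ 2 * (c - t) := by
  have hσ2 : 2 * σ ^ 2 ≤ 1 := by nlinarith
  have hσc : σ ≤ c := by nlinarith
  obtain ⟨hP, hP2⟩ := steep_end (s := s₂) hc hσ h1 hσc ha (le_of_abs_le hx₂)
    (hq₂.trans (pow_le_pow_left₀ (by linarith) (by linarith [le_abs_self (a + s₂ * c)]) 2))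
  have hab : |(-a) + (-s₁) * c| = |a + s₁ * c| := by
    rw [← abs_neg]; congr 1; ring
  obtain ⟨hN, hN2⟩ := steep_end (t := t) (a := -a) (s := -s₁) hc hσ h1 hσc (by simpa using ha)
    (le_of_abs_le (hab.trans_le hx₁)) (by
      have : t ^ 2 + (-s₁) ^ 2 - (-a + -s₁ * c) ^ 2 = t ^ 2 + s₁ ^ 2 - (a + s₁ * c) ^ 2 := by ring
      rw [this]
      refine hq₁.trans (pow_le_pow_left₀ (by linarith) ?_ 2)
      rw [← hab]; linarith [le_abs_self (-a + -s₁ * c)])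
  -- The Lorentz products of the two ends with `u`: `P + N = 2 c - (2 c² - 1) (s₂ - s₁)`, so the
  -- goal is `2 t ≤ P + N`.
  set P := c * (1 - 2 * a) - (2 * c ^ 2 - 1) * s₂ with hPd
  set N := c * (1 - 2 * -a) - (2 * c ^ 2 - 1) * -s₁ with hNd
  have hsum : P + N = 2 * c - (2 * c ^ 2 - 1) * (s₂ - s₁) := by rw [hPd, hNd]; ring
  clear_value P N
  set q := σ ^ 2 + t ^ 2 * (1 - 2 * σ ^ 2) + 2 * a ^ 2 with hq
  have hp1 : q - 2 * a ≤ P ^ 2 := by linarith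
  have hn1 : q + 2 * a ≤ N ^ 2 := by linarith
  have habs : |a| ≤ t * σ := abs_le_of_sq_le_sq' (by rwa [mul_pow]) (by positivity) |> abs_le.2
  have htσ : t * σ ≤ 1 / 2 := by nlinarith [sq_nonneg (t - σ)]
  have hq0 : 2 * |a| ≤ q := by
    have : q - 2 * |a| = (σ - t) ^ 2 + 2 * ((t * σ - |a|) * (1 - t * σ - |a|)) := by
      rw [hq, ← sq_abs a]; ring
    have := mul_nonneg (sub_nonneg.2 habs) (show 0 ≤ 1 - t * σ - |a| by linarith)
    nlinarith [sq_nonneg (σ - t)]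
  have hqa : 0 ≤ q - 2 * a := by linarith [le_abs_self a]
  have hqb : 0 ≤ q + 2 * a := by linarith [neg_abs_le a]
  have hPN : (q - 2 * a) * (q + 2 * a) ≤ (P * N) ^ 2 := by
    rw [mul_pow]; exact mul_le_mul hp1 hn1 hqb (sq_nonneg _)
  -- The difference of the two sides factors, and vanishes in the planar case `a² = t² σ²`.
  have hkey : (2 * t ^ 2 - q) ^ 2 ≤ (q - 2 * a) * (q + 2 * a) := by
    have : (q - 2 * a) * (q + 2 * a) - (2 * t ^ 2 - q) ^ 2
        = 4 * ((t ^ 2 * σ ^ 2 - a ^ 2) * (1 - 2 * t ^ 2)) := by rw [hq]; ring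
    nlinarith [mul_nonneg (sub_nonneg.2 ha) (sub_nonneg.2 ht2)]
  have hf : 2 * t ^ 2 - q ≤ P * N :=
    le_of_abs_le (abs_le_of_sq_le_sq (hkey.trans hPN) (by positivity))
  have hsq : (2 * t) ^ 2 ≤ (P + N) ^ 2 := by
    have e1 : (P + N) ^ 2 = P ^ 2 + N ^ 2 + 2 * (P * N) := by ring
    have e2 : (2 * t) ^ 2 = 4 * t ^ 2 := by ring
    rw [e1, e2]
    linarith
  have := abs_le_of_sq_le_sq hsq (by positivity)
  linarith [le_abs_self (2 * t)]

/-- For a line meeting the half `x_k ≥ 1/2` of the cone, the foot `p` of the perpendicular from the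
origin satisfies `t² ≤ p k`. Indeed `t² = ⟪p, x⟫ ≤ a x_k + |w| (1 - x_k)`, with `w` the other
coordinates of `p`. This is at most `a` if `|w| ≤ a`, and otherwise it would be at most
`(a + |w|) / 2 ≤ t / √2 < t²`. -/
lemma tip_height {t a b s : ℝ} (ht2 : 1 < 2 * t ^ 2)
    (ha : a ^ 2 ≤ t ^ 2 * (1 - b ^ 2)) (hx : 1 / 2 ≤ a + s * b) (hx1 : a + s * b ≤ 1)
    (hq : t ^ 2 + s ^ 2 - (a + s * b) ^ 2 ≤ (1 - (a + s * b)) ^ 2) : t ^ 2 ≤ a := by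
  set x := a + s * b with hxd
  have hta : 0 ≤ t ^ 2 - a ^ 2 := by nlinarith [mul_nonneg (sq_nonneg t) (sq_nonneg b)]
  obtain ⟨w, hw, hw2⟩ : ∃ w, 0 ≤ w ∧ w ^ 2 = t ^ 2 - a ^ 2 :=
    ⟨_, Real.sqrt_nonneg _, Real.sq_sqrt hta⟩
  have e1 : (t ^ 2 - a * x) ^ 2 ≤ (t ^ 2 - a ^ 2) * (t ^ 2 + s ^ 2 - x ^ 2) := by
    have : (t ^ 2 - a ^ 2) * (t ^ 2 + s ^ 2 - x ^ 2) - (t ^ 2 - a * x) ^ 2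
        = s ^ 2 * (t ^ 2 * (1 - b ^ 2) - a ^ 2) := by rw [hxd]; ring
    nlinarith [mul_nonneg (sq_nonneg s) (sub_nonneg.2 ha)]
  have e2 : (t ^ 2 - a * x) ^ 2 ≤ (w * (1 - x)) ^ 2 := by
    rw [mul_pow, hw2]
    exact e1.trans (mul_le_mul_of_nonneg_left hq hta)
  have e3 : t ^ 2 - a * x ≤ w * (1 - x) :=
    le_of_abs_le (abs_le_of_sq_le_sq e2 (mul_nonneg hw (by linarith)))
  by_contra hlt
  push Not at hlt
  rcases le_or_gt w a with h | h
  · nlinarith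
  · have h5 : t ^ 2 ≤ (a + w) / 2 := by nlinarith
    have h6 : (a + w) ^ 2 ≤ 2 * t ^ 2 := by nlinarith [sq_nonneg (a - w)]
    nlinarith [sq_nonneg t]

/-- A chord of the double cone reaching the half `x_k ≥ 1/2`, at distance `t > 1 / √2`, is at most
as long as the planar chord with the same `σ`, the sine of the angle between its direction and the
axis; moreover `t ≤ σ`. -/
lemma tip_bound {t a b σ s₁ s₂ : ℝ} (ht : 0 ≤ t) (ht2 : 1 < 2 * t ^ 2) (hσ : 0 ≤ σ)
    (h1 : σ ^ 2 + b ^ 2 = 1) (ha : a ^ 2 ≤ t ^ 2 * σ ^ 2)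
    (hx : 1 / 2 ≤ a + s₂ * b) (hx₂ : |a + s₂ * b| ≤ 1)
    (hq₂ : t ^ 2 + s₂ ^ 2 - (a + s₂ * b) ^ 2 ≤ (1 - |a + s₂ * b|) ^ 2)
    (hx₁ : |a + s₁ * b| ≤ 1)
    (hq₁ : t ^ 2 + s₁ ^ 2 - (a + s₁ * b) ^ 2 ≤ (1 - |a + s₁ * b|) ^ 2) :
    t ≤ σ ∧ (2 * σ ^ 2 - 1) * |s₂ - s₁| ≤ 2 * (σ - t) := by
  have hs : b ^ 2 = 1 - σ ^ 2 := by linarith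
  have q₂ : t ^ 2 + s₂ ^ 2 - (a + s₂ * b) ^ 2 ≤ (1 - (a + s₂ * b)) ^ 2 :=
    hq₂.trans (pow_le_pow_left₀ (by linarith) (by linarith [le_abs_self (a + s₂ * b)]) 2)
  have q₁ : t ^ 2 + s₁ ^ 2 - (a + s₁ * b) ^ 2 ≤ (1 - (a + s₁ * b)) ^ 2 :=
    hq₁.trans (pow_le_pow_left₀ (by linarith) (by linarith [le_abs_self (a + s₁ * b)]) 2)
  have hta : t ^ 2 ≤ a :=
    tip_height ht2 (by rw [hs]; linarith) hx (le_of_abs_le hx₂) q₂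
  have haσ : a ≤ t * σ := le_of_abs_le (abs_le_of_sq_le_sq (by rwa [mul_pow]) (by positivity))
  have htp : 0 < t := by nlinarith
  have htσ : t ≤ σ := by nlinarith
  refine ⟨htσ, ?_⟩
  have hA : 0 < 2 * σ ^ 2 - 1 := by nlinarith
  have key : ∀ s, t ^ 2 + s ^ 2 - (a + s * b) ^ 2 ≤ (1 - (a + s * b)) ^ 2 →
      |(2 * σ ^ 2 - 1) * s + b * (1 - 2 * a)| ≤ σ - t := by
    intro s hq
    refine abs_le_of_sq_le_sq ?_ (by linarith)
    have e1 := mul_nonneg hA.le (sub_nonneg.2 hq)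
    -- Both `a` and `t σ` are at least `t² > 1/2`, which makes the planar value `a = t σ` extremal.
    have e2 : 0 ≤ (t * σ - a) * (t * σ + a - 1) := mul_nonneg (by linarith) (by nlinarith)
    have e3 : ((2 * σ ^ 2 - 1) * s + b * (1 - 2 * a)) ^ 2 = (σ - t) ^ 2
       - (2 * σ ^ 2 - 1) * ((1 - (a + s * b)) ^ 2 - (t ^ 2 + s ^ 2 - (a + s * b) ^ 2))
       - 2 * ((t * σ - a) * (t * σ + a - 1)) := by
      linear_combination (1 - 4 * a + 4 * a ^ 2 + s ^ 2 * (4 * σ ^ 2 - 2)) * h1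
    linarith
  have k1 := abs_le.1 (key s₁ q₁)
  have k2 := abs_le.1 (key s₂ q₂)
  rw [← abs_of_pos hA, ← abs_mul, abs_le]
  constructor <;> linarith [k1.1, k1.2, k2.1, k2.2]

/-! ### The planar length function -/

/-- The claimed maximal length of a chord of the cross-polytope at distance `t`. -/
noncomputable def maxChord (t : ℝ) : ℝ :=
  if t ≤ 1 / Real.sqrt 2 then 2 / (t + Real.sqrt (1 - t ^ 2))
  else if t ≤ 3 / 4 then t - Real.sqrt (t ^ 2 - 1 / 2)
  else 2 - 2 * t

lemma le_inv_sqrt_two_iff {t : ℝ} (ht : 0 ≤ t) : t ≤ 1 / Real.sqrt 2 ↔ 2 * t ^ 2 ≤ 1 := by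
  rw [le_div_iff₀ (by positivity)]
  have h2 : Real.sqrt 2 ^ 2 = 2 := Real.sq_sqrt (by norm_num)
  have h : (t * Real.sqrt 2) ^ 2 = 2 * t ^ 2 := by rw [mul_pow, h2]; ring
  rw [← h, sq_le_one_iff₀ (by positivity)]

/-- The planar chord length `2 (c - t) / (2 c² - 1)` on `c ≥ r` is at most `2 / (t + r)`, its value
at `c = r`. -/
lemma steep_planar {t r c : ℝ} (hr : 0 ≤ r) (htr : t ≤ r) (h1 : t ^ 2 + r ^ 2 = 1)
    (hrc : r ≤ c) : (c - t) * (t + r) ≤ 2 * c ^ 2 - 1 := by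
  have : 2 * c ^ 2 - 1 - (c - t) * (t + r) = (c - r) * (2 * c + r - t) := by
    rw [← h1]; ring
  nlinarith [mul_nonneg (sub_nonneg.2 hrc) (show 0 ≤ 2 * c + r - t by linarith)]

/-- Maximisation of the planar chord length `2 (σ - t) / (2 σ² - 1)` over `σ ∈ [t, 1]`. -/
lemma tip_planar {t σ : ℝ} (ht : 0 ≤ t) (ht2 : 1 < 2 * t ^ 2) (htσ : t ≤ σ) (hσ : σ ≤ 1) :
    2 * (σ - t) ≤ maxChord t * (2 * σ ^ 2 - 1) := by
  rw [maxChord, if_neg (by rw [le_inv_sqrt_two_iff ht]; linarith)]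
  split_ifs with h
  · have hw2 := Real.sq_sqrt (show 0 ≤ t ^ 2 - 1 / 2 by linarith)
    have hw := Real.sqrt_nonneg (t ^ 2 - 1 / 2)
    set w := Real.sqrt (t ^ 2 - 1 / 2)
    have hwt : w < t := by nlinarith
    have hm : 0 < t - w := by linarith
    refine le_of_mul_le_mul_left ?_ hm
    -- The discriminant in `σ` vanishes because `m = t - w` satisfies `m² - 2 t m + 1/2 = 0`.
    have : (t - w) * ((t - w) * (2 * σ ^ 2 - 1)) - (t - w) * (2 * (σ - t))
        = 2 * ((t - w) * σ - 1 / 2) ^ 2 := by linear_combination -hw2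
    nlinarith [sq_nonneg ((t - w) * σ - 1 / 2)]
  · push Not at h
    have : (2 - 2 * t) * (2 * σ ^ 2 - 1) - 2 * (σ - t)
        = 2 * ((1 - σ) * (1 - 2 * (1 - t) * (σ + 1))) := by ring
    have : 0 ≤ (1 - σ) * (1 - 2 * (1 - t) * (σ + 1)) :=
      mul_nonneg (by linarith) (by nlinarith)
    linarith

/-! ### Upper bound for the parameter length -/

/-- The cross-polytope lies in the double cone about each coordinate axis. -/
lemma coord_bound {n : ℕ} (z : Fin n → ℝ) (hz : ∑ i, |z i| ≤ 1) (k : Fin n) :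
    |z k| ≤ 1 ∧ ∑ i, z i ^ 2 - z k ^ 2 ≤ (1 - |z k|) ^ 2 := by
  have e1 := Finset.add_sum_erase Finset.univ (fun i => |z i|) (Finset.mem_univ k)
  have e2 := Finset.add_sum_erase Finset.univ (fun i => z i ^ 2) (Finset.mem_univ k)
  have h0 : 0 ≤ ∑ i ∈ Finset.univ.erase k, |z i| := Finset.sum_nonneg fun _ _ => abs_nonneg _
  have h2 : ∑ i ∈ Finset.univ.erase k, z i ^ 2 ≤ (∑ i ∈ Finset.univ.erase k, |z i|) ^ 2 := by
    simp_rw [← sq_abs (z _)]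
    exact Finset.sum_sq_le_sq_sum_of_nonneg fun _ _ => abs_nonneg _
  have h3 : (∑ i ∈ Finset.univ.erase k, |z i|) ^ 2 ≤ (1 - |z k|) ^ 2 :=
    pow_le_pow_left₀ h0 (by linarith) 2
  exact ⟨by linarith, by linarith⟩

/-- Bessel's inequality for `e_k` and the orthonormal pair `p / t`, `u`, in a form that allows
`t = 0`. -/
lemma bessel {n : ℕ} {p u : Fin n → ℝ} {t : ℝ} (hp : ∑ i, p i ^ 2 = t ^ 2)
    (hu : ∑ i, u i ^ 2 = 1) (hpu : ∑ i, p i * u i = 0) (k : Fin n) :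
    p k ^ 2 ≤ t ^ 2 * (1 - u k ^ 2) := by
  have e1 := Finset.add_sum_erase Finset.univ (fun i => p i ^ 2) (Finset.mem_univ k)
  have e2 := Finset.add_sum_erase Finset.univ (fun i => u i ^ 2) (Finset.mem_univ k)
  have e3 := Finset.add_sum_erase Finset.univ (fun i => p i * u i) (Finset.mem_univ k)
  have := Finset.sum_mul_sq_le_sq_mul_sq (Finset.univ.erase k) p u
  rw [show ∑ i ∈ Finset.univ.erase k, p i * u i = -(p k * u k) by linarith,
    show ∑ i ∈ Finset.univ.erase k, p i ^ 2 = t ^ 2 - p k ^ 2 by linarith,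
    show ∑ i ∈ Finset.univ.erase k, u i ^ 2 = 1 - u k ^ 2 by linarith] at this
  linarith

lemma sum_sq_line {n : ℕ} {p u : Fin n → ℝ} {t : ℝ} (hp : ∑ i, p i ^ 2 = t ^ 2)
    (hu : ∑ i, u i ^ 2 = 1) (hpu : ∑ i, p i * u i = 0) (s : ℝ) :
    ∑ i, (p i + s * u i) ^ 2 = t ^ 2 + s ^ 2 := by
  have : ∀ i, (p i + s * u i) ^ 2 = p i ^ 2 + 2 * s * (p i * u i) + s ^ 2 * u i ^ 2 :=
    fun i => by ring
  simp_rw [this, Finset.sum_add_distrib, ← Finset.mul_sum, hp, hu, hpu]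
  ring

/-- If a unit vector has `ℓ¹` norm `U` below `t + r`, then its largest coordinate `c` is at
least `r`: the norm `U` is at least `1 / c` and at least `c + σ` with `σ = √(1 - c²)`. -/
lemma large_coord {t r c σ U : ℝ} (ht : 0 ≤ t) (hr : 0 ≤ r) (hc : 0 ≤ c) (hσ : 0 ≤ σ)
    (htr : t ^ 2 + r ^ 2 = 1) (hcσ : c ^ 2 + σ ^ 2 = 1) (hcU : 1 ≤ c * U) (hcσU : c + σ ≤ U)
    (hU : U < t + r) : 1 < 2 * c ^ 2 ∧ r ≤ c ∧ σ ≤ t := by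
  have hc0 : 0 < c := by
    rcases hc.eq_or_lt with h | h
    · rw [← h] at hcU; linarith
    · exact h
  have hc2 : 1 < 2 * c ^ 2 := by
    have e1 : (t + r) ^ 2 ≤ 2 := by linarith [sq_nonneg (t - r), add_sq t r, sub_sq t r]
    have e2 : 1 < c * (t + r) := hcU.trans_lt (mul_lt_mul_of_pos_left hU hc0)
    have e3 : 1 < (c * (t + r)) ^ 2 := one_lt_pow₀ e2 two_ne_zero
    rw [mul_pow] at e3
    linarith [mul_le_mul_of_nonneg_left e1 (sq_nonneg c)]
  have hrc : r ≤ c := by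
    by_contra h
    push Not at h
    have e0 : c ^ 2 < r ^ 2 := pow_lt_pow_left₀ h hc two_ne_zero
    have e1 : (c + σ) ^ 2 < (t + r) ^ 2 :=
      pow_lt_pow_left₀ (hcσU.trans_lt hU) (by linarith) two_ne_zero
    have e2 : c * σ < t * r := by linarith [add_sq c σ, add_sq t r]
    have e3 : (c * σ) ^ 2 < (t * r) ^ 2 := pow_lt_pow_left₀ e2 (by positivity) two_ne_zero
    rw [mul_pow, mul_pow, show σ ^ 2 = 1 - c ^ 2 by linarith,
      show t ^ 2 = 1 - r ^ 2 by linarith] at e3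
    have : 0 ≤ (r ^ 2 - c ^ 2) * (r ^ 2 + c ^ 2 - 1) :=
      mul_nonneg (by linarith) (by linarith)
    linarith
  exact ⟨hc2, hrc, le_of_abs_le (abs_le_of_sq_le_sq
    (by linarith [pow_le_pow_left₀ hr hrc 2]) ht)⟩

lemma chord_le_of_small {n : ℕ} {p u : Fin n → ℝ} {t : ℝ} (ht : 0 ≤ t) (ht2 : 2 * t ^ 2 ≤ 1)
    (hp : ∑ i, p i ^ 2 = t ^ 2) (hu : ∑ i, u i ^ 2 = 1) (hpu : ∑ i, p i * u i = 0) {s₁ s₂ : ℝ}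
    (h₁ : ∑ i, |p i + s₁ * u i| ≤ 1) (h₂ : ∑ i, |p i + s₂ * u i| ≤ 1) :
    s₂ - s₁ ≤ maxChord t := by
  rw [maxChord, if_pos ((le_inv_sqrt_two_iff ht).2 ht2)]
  have hr2 := Real.sq_sqrt (show 0 ≤ 1 - t ^ 2 by linarith)
  have hr := Real.sqrt_nonneg (1 - t ^ 2)
  set r := Real.sqrt (1 - t ^ 2)
  have htr : t ≤ r := abs_le_of_sq_le_sq (by linarith) hr |> le_of_abs_le
  have hrp : 0 < r := by nlinarith
  rw [le_div_iff₀ (by linarith)]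
  rcases lt_or_ge s₂ s₁ with hs | hs
  · nlinarith
  have hL : (s₂ - s₁) * ∑ i, |u i| ≤ 2 := by
    calc (s₂ - s₁) * ∑ i, |u i| = ∑ i, |(p i + s₂ * u i) - (p i + s₁ * u i)| := by
          rw [Finset.mul_sum]
          refine Finset.sum_congr rfl fun i _ => ?_
          rw [show p i + s₂ * u i - (p i + s₁ * u i) = (s₂ - s₁) * u i by ring, abs_mul,
            abs_of_nonneg (sub_nonneg.2 hs)]
      _ ≤ ∑ i, (|p i + s₂ * u i| + |p i + s₁ * u i|) :=
          Finset.sum_le_sum fun i _ => abs_sub _ _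
      _ ≤ 2 := by rw [Finset.sum_add_distrib]; linarith
  rcases le_or_gt (t + r) (∑ i, |u i|) with hU | hU
  · exact (mul_le_mul_of_nonneg_left hU (by linarith)).trans hL
  have hne : (Finset.univ : Finset (Fin n)).Nonempty := by
    by_contra h
    rw [Finset.not_nonempty_iff_eq_empty] at h
    rw [h] at hu; simp at hu
  obtain ⟨k, -, hk⟩ := Finset.exists_max_image Finset.univ (fun i => |u i|) hne
  have hcU : 1 ≤ |u k| * ∑ i, |u i| := by
    rw [← hu, Finset.mul_sum]
    refine Finset.sum_le_sum fun i hi => ?_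
    rw [← sq_abs, sq]
    exact mul_le_mul_of_nonneg_right (hk i hi) (abs_nonneg _)
  have hc0 : 0 ≤ |u k| := abs_nonneg _
  have hc1 : |u k| ^ 2 ≤ 1 := by
    rw [sq_abs, ← hu]
    exact Finset.single_le_sum (f := fun i => u i ^ 2) (fun i _ => sq_nonneg _) (Finset.mem_univ k)
  have hσ2 := Real.sq_sqrt (show 0 ≤ 1 - |u k| ^ 2 by linarith)
  have hσ := Real.sqrt_nonneg (1 - |u k| ^ 2)
  set σ := Real.sqrt (1 - |u k| ^ 2)
  have hcσU : |u k| + σ ≤ ∑ i, |u i| := by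
    have e1 := Finset.add_sum_erase Finset.univ (fun i => |u i|) (Finset.mem_univ k)
    have e2 := Finset.add_sum_erase Finset.univ (fun i => u i ^ 2) (Finset.mem_univ k)
    have h0 : 0 ≤ ∑ i ∈ Finset.univ.erase k, |u i| := Finset.sum_nonneg fun _ _ => abs_nonneg _
    have h2 : ∑ i ∈ Finset.univ.erase k, u i ^ 2 ≤ (∑ i ∈ Finset.univ.erase k, |u i|) ^ 2 := by
      simp_rw [← sq_abs (u _)]
      exact Finset.sum_sq_le_sq_sum_of_nonneg fun _ _ => abs_nonneg _
    have : σ ≤ ∑ i ∈ Finset.univ.erase k, |u i| := by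
      refine le_of_abs_le (abs_le_of_sq_le_sq (le_trans ?_ h2) h0)
      rw [hσ2, sq_abs]; linarith
    linarith
  obtain ⟨hc2, hrc, hσt⟩ := large_coord ht hr hc0 hσ (by linarith) (by linarith)
    hcU hcσU hU
  have hB : (2 * |u k| ^ 2 - 1) * (s₂ - s₁) ≤ 2 * (|u k| - t) := by
    have ha := bessel hp hu hpu k
    obtain ⟨a₁, b₁⟩ := coord_bound _ h₁ k
    obtain ⟨a₂, b₂⟩ := coord_bound _ h₂ k
    rw [sum_sq_line hp hu hpu] at b₁ b₂
    rw [← sq_abs (u k), ← hσ2] at ha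
    rcases abs_cases (u k) with ⟨h, -⟩ | ⟨h, -⟩
    · refine steep_bound ht ht2 hc0 hσ (by linarith) hσt ha ?_ ?_ ?_ ?_ <;> rw [h] <;> assumption
    · have e : ∀ s, -(p k) + s * -(u k) = -(p k + s * u k) := fun s => by ring
      -- A negative `u k` is handled by reflecting the line in the origin.
      refine steep_bound (a := -(p k)) ht ht2 hc0 hσ (by linarith) hσt (by rwa [neg_sq])
        ?_ ?_ ?_ ?_ <;> rw [h, e, abs_neg] <;> try rw [neg_sq]
      all_goals assumption
  have hpl := steep_planar hr htr (by linarith) hrc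
  have hA : 0 < 2 * |u k| ^ 2 - 1 := by linarith
  refine le_of_mul_le_mul_left ?_ hA
  calc (2 * |u k| ^ 2 - 1) * ((s₂ - s₁) * (t + r))
      = ((2 * |u k| ^ 2 - 1) * (s₂ - s₁)) * (t + r) := by ring
    _ ≤ 2 * (|u k| - t) * (t + r) := mul_le_mul_of_nonneg_right hB (by linarith)
    _ ≤ (2 * |u k| ^ 2 - 1) * 2 := by linarith

lemma chord_le_of_large {n : ℕ} {p u : Fin n → ℝ} {t : ℝ} (ht : 0 ≤ t) (ht2 : 1 < 2 * t ^ 2)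
    (hp : ∑ i, p i ^ 2 = t ^ 2) (hu : ∑ i, u i ^ 2 = 1) (hpu : ∑ i, p i * u i = 0) {s₁ s₂ : ℝ}
    (h₁ : ∑ i, |p i + s₁ * u i| ≤ 1) (h₂ : ∑ i, |p i + s₂ * u i| ≤ 1) :
    s₂ - s₁ ≤ maxChord t := by
  have hz2 := sum_sq_line hp hu hpu s₂
  obtain ⟨k, hk⟩ : ∃ k, 1 / 2 ≤ |p k + s₂ * u k| := by
    by_contra! h
    have : ∑ i, (p i + s₂ * u i) ^ 2 ≤ 1 / 2 * ∑ i, |p i + s₂ * u i| := by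
      rw [Finset.mul_sum]
      refine Finset.sum_le_sum fun i _ => ?_
      rw [← sq_abs, sq]
      exact mul_le_mul_of_nonneg_right (h i).le (abs_nonneg _)
    nlinarith [sq_nonneg s₂]
  have ha := bessel hp hu hpu k
  obtain ⟨a₁, b₁⟩ := coord_bound _ h₁ k
  obtain ⟨a₂, b₂⟩ := coord_bound _ h₂ k
  rw [sum_sq_line hp hu hpu] at b₁ b₂
  have hb1 : u k ^ 2 ≤ 1 := by
    rw [← hu]
    exact Finset.single_le_sum (f := fun i => u i ^ 2) (fun i _ => sq_nonneg _) (Finset.mem_univ k)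
  have hσ2 := Real.sq_sqrt (show 0 ≤ 1 - u k ^ 2 by linarith)
  have hσ := Real.sqrt_nonneg (1 - u k ^ 2)
  set σ := Real.sqrt (1 - u k ^ 2)
  rw [← hσ2] at ha
  have hB : t ≤ σ ∧ (2 * σ ^ 2 - 1) * |s₂ - s₁| ≤ 2 * (σ - t) := by
    rcases abs_cases (p k + s₂ * u k) with ⟨h, -⟩ | ⟨h, -⟩
    · exact tip_bound ht ht2 hσ (by linarith) ha (h ▸ hk) a₂ b₂ a₁ b₁
    · have e : ∀ s, -(p k) + s * -(u k) = -(p k + s * u k) := fun s => by ring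
      -- A point with `x_k ≤ -1/2` is handled by reflecting the line in the origin.
      refine tip_bound (a := -(p k)) (b := -(u k)) ht ht2 hσ (by rw [neg_sq]; linarith)
        (by rwa [neg_sq]) (by rw [e, ← h]; exact hk) ?_ ?_ ?_ ?_ <;> rw [e, abs_neg] <;>
        try rw [neg_sq]
      all_goals assumption
  obtain ⟨htσ, hB⟩ := hB
  have hσ1 : σ ≤ 1 := by nlinarith [sq_nonneg (u k)]
  have := tip_planar ht ht2 htσ hσ1
  have hA : 0 < 2 * σ ^ 2 - 1 := by nlinarith
  refine (le_abs_self _).trans (le_of_mul_le_mul_left ?_ hA)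
  linarith

/-! ### Extremal planar chords -/

/-- In the plane, the line with unit normal `(c, d)` at distance `t` has a chord of length at least
`maxChord t` for a suitable normal. For `2 t² ≤ 1` the line passes through the vertex `(0, 1)`; for
larger `t` it separates the vertex `(1, 0)` from the origin, or passes through it when `t = 1`. -/
lemma exists_planar_chord_s1 {t : ℝ} (ht : 0 ≤ t) (ht1 : t ≤ 1) :
    ∃ c d m : ℝ, c ^ 2 + d ^ 2 = 1 ∧
      ∀ s ∈ Icc m (m + maxChord t), |t * c - s * d| + |t * d + s * c| ≤ 1 := by
  have key : ∀ x y : ℝ, x + y ≤ 1 → x - y ≤ 1 → -x + y ≤ 1 → -x - y ≤ 1 → |x| + |y| ≤ 1 := by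
    intro x y h1 h2 h3 h4
    rcases abs_cases x with ⟨h, -⟩ | ⟨h, -⟩ <;> rcases abs_cases y with ⟨h', -⟩ | ⟨h', -⟩ <;>
      rw [h, h'] <;> linarith
  rcases le_or_gt (2 * t ^ 2) 1 with ht2 | ht2
  · rw [maxChord, if_pos ((le_inv_sqrt_two_iff ht).2 ht2)]
    have hr2 := Real.sq_sqrt (show 0 ≤ 1 - t ^ 2 by linarith)
    have hr := Real.sqrt_nonneg (1 - t ^ 2)
    set r := Real.sqrt (1 - t ^ 2)
    have htr : t ≤ r := abs_le_of_sq_le_sq (by linarith) hr |> le_of_abs_le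
    have hrp : 0 < t + r := by nlinarith
    set M := 2 / (t + r) with hM
    have hMe : M * (t + r) = 2 := div_mul_cancel₀ _ hrp.ne'
    refine ⟨r, t, r - M, by linarith, fun s hs => ?_⟩
    have h0 : s ≤ r := by linarith [hs.2]
    have e1 : t * r - s * t = t * (r - s) := by ring
    have e2 : t * t + s * r = 1 - r * (r - s) := by nlinarith
    have h1 : (r - s) * (t + r) ≤ 2 := by
      rw [← hMe]; exact mul_le_mul_of_nonneg_right (by linarith [hs.1]) hrp.le
    have h2 := mul_nonneg (sub_nonneg.2 h0) ht
    have h3 := mul_nonneg (sub_nonneg.2 h0) (sub_nonneg.2 htr)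
    have h4 := mul_nonneg (sub_nonneg.2 h0) hr
    rw [e1, e2]
    apply key <;> linarith
    -- The first coordinate `c` of the normal is the maximiser of `2 (c - t) / (2 c² - 1)` on
    -- `[t, 1]`.
  · obtain ⟨c, hct, hc1, hcM⟩ : ∃ c, t ≤ c ∧ c ≤ 1 ∧
        2 * (c - t) = maxChord t * (2 * c ^ 2 - 1) := by
      rw [maxChord, if_neg (by rw [le_inv_sqrt_two_iff ht]; linarith)]
      split_ifs with h
      · have hw2 := Real.sq_sqrt (show 0 ≤ t ^ 2 - 1 / 2 by linarith)
        have hw := Real.sqrt_nonneg (t ^ 2 - 1 / 2)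
        set w := Real.sqrt (t ^ 2 - 1 / 2)
        refine ⟨t + w, by linarith, ?_, by linear_combination (2 * t + 2 * w) * hw2⟩
        have : w ≤ 1 - t := le_of_abs_le (abs_le_of_sq_le_sq (by nlinarith) (by linarith))
        linarith
      · exact ⟨1, ht1, le_rfl, by ring⟩
    have hd2 := Real.sq_sqrt (show 0 ≤ 1 - c ^ 2 by nlinarith)
    have hd := Real.sqrt_nonneg (1 - c ^ 2)
    set d := Real.sqrt (1 - c ^ 2)
    have hdt : d ≤ t := le_of_abs_le (abs_le_of_sq_le_sq (by nlinarith) ht)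
    have hdc : d < c := abs_lt_of_sq_lt_sq (by nlinarith) (by linarith) |> lt_of_abs_lt
    have hc0 : 0 < c := by linarith
    have hcd : 0 < c + d := by linarith
    have hcd' : 0 < c - d := by linarith
    set M := maxChord t
    refine ⟨c, d, -d - (c - t) * (c - d) / (c + d), by linarith, fun s hs => ?_⟩
    -- `s + d` is the parameter measured from the foot of the perpendicular from `(1, 0)`; the bounds
    -- `h1` and `h2` say that the point stays between the lines of the two edges at `(1, 0)`.
    have h1 : -((c - t) * (c - d)) ≤ (s + d) * (c + d) := by
      have : -((c - t) * (c - d) / (c + d)) ≤ s + d := by linarith [hs.1]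
      rwa [← neg_div, div_le_iff₀ hcd] at this
    have h2 : (s + d) * (c - d) ≤ (c - t) * (c + d) := by
      have e1 : (s + d) ≤ M - (c - t) * (c - d) / (c + d) := by linarith [hs.2]
      refine (mul_le_mul_of_nonneg_right e1 hcd'.le).trans (le_of_eq ?_)
      have e2 : M * (c - d) * (c + d) = 2 * (c - t) := by
        rw [hcM]; linear_combination (-M) * hd2
      field_simp
      linear_combination e2 - 2 * (c - t) * hd2
    have h3 : (c - t) * c + (s + d) * d ≤ 1 := by
      refine le_of_mul_le_mul_right ?_ hcd'
      have e : (c - t) * (c * (c - d) + d * (c + d)) ≤ c - d := by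
        rw [show c * (c - d) + d * (c + d) = 1 by linarith]; linarith
      nlinarith [mul_le_mul_of_nonneg_right h2 hd]
    have e1 : t * c - s * d = 1 - (c - t) * c - (s + d) * d := by linarith
    have e2 : t * d + s * c = (s + d) * c - (c - t) * d := by ring
    rw [e1, e2]
    apply key <;> linarith

/-! ### Lines and their lengths -/

lemma hausdorff_line {n : ℕ} (p u : EuclideanSpace ℝ (Fin n)) (hu : ‖u‖ = 1) :
    μH[1] ({x : EuclideanSpace ℝ (Fin n) | ∑ k, |x k| ≤ 1} ∩ range fun s : ℝ => p + s • u) =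
      volume {s : ℝ | ∑ k, |p k + s * u k| ≤ 1} := by
  have hiso : Isometry fun s : ℝ => p + s • u := by
    refine Isometry.of_dist_eq fun a b => ?_
    rw [dist_add_left, dist_eq_norm, ← sub_smul, norm_smul, hu, mul_one, Real.dist_eq,
      Real.norm_eq_abs]
  rw [← image_preimage_eq_inter_range, hiso.hausdorffMeasure_image (by simp),
    hausdorffMeasure_real]
  simp

lemma infDist_line {n : ℕ} {p u : EuclideanSpace ℝ (Fin n)} (hpu : inner ℝ p u = 0) :
    infDist 0 (range fun s : ℝ => p + s • u) = ‖p‖ := by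
  apply le_antisymm
  · have := infDist_le_dist_of_mem (x := (0 : EuclideanSpace ℝ (Fin n)))
      (show p ∈ range fun s : ℝ => p + s • u from ⟨0, by simp⟩)
    simpa using this
  · refine (le_infDist (range_nonempty _)).2 ?_
    rintro _ ⟨s, rfl⟩
    have h := norm_add_sq_eq_norm_sq_add_norm_sq_real
      (show inner ℝ p (s • u) = 0 by rw [real_inner_smul_right, hpu, mul_zero])
    rw [dist_zero_left]
    nlinarith [norm_nonneg p, norm_nonneg (p + s • u), norm_nonneg (s • u)]

lemma exists_param {n : ℕ} {ℓ : AffineSubspace ℝ (EuclideanSpace ℝ (Fin n))}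
    (h : Module.finrank ℝ ℓ.direction = 1) :
    ∃ p u : EuclideanSpace ℝ (Fin n), ‖u‖ = 1 ∧ inner ℝ p u = 0 ∧
      (ℓ : Set (EuclideanSpace ℝ (Fin n))) = range fun s : ℝ => p + s • u := by
  have hne : (ℓ : Set (EuclideanSpace ℝ (Fin n))).Nonempty := by
    rw [AffineSubspace.nonempty_iff_ne_bot]
    rintro rfl
    rw [AffineSubspace.direction_bot, finrank_bot] at h
    exact zero_ne_one h
  obtain ⟨q, hq⟩ := hne
  obtain ⟨v, hv0, hv⟩ := finrank_eq_one_iff'.1 h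
  have hv0' : (v : EuclideanSpace ℝ (Fin n)) ≠ 0 := by simpa using hv0
  have hvn : ‖(v : EuclideanSpace ℝ (Fin n))‖ ≠ 0 := norm_ne_zero_iff.2 hv0'
  set u : EuclideanSpace ℝ (Fin n) := ‖(v : EuclideanSpace ℝ (Fin n))‖⁻¹ • v with hud
  have hu : ‖u‖ = 1 := by rw [hud, norm_smul, norm_inv, norm_norm, inv_mul_cancel₀ hvn]
  have hudir : u ∈ ℓ.direction := ℓ.direction.smul_mem _ v.2
  refine ⟨q - inner ℝ q u • u, u, hu, ?_, ?_⟩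
  · rw [inner_sub_left, real_inner_smul_left, real_inner_self_eq_norm_sq, hu]; ring
  · ext x
    simp only [SetLike.mem_coe, mem_range]
    constructor
    · intro hx
      obtain ⟨c, hc⟩ := hv ⟨x -ᵥ q, AffineSubspace.vsub_mem_direction hx hq⟩
      have hc' : c • (v : EuclideanSpace ℝ (Fin n)) = x - q := congrArg Subtype.val hc
      have hvu : (v : EuclideanSpace ℝ (Fin n)) = ‖(v : EuclideanSpace ℝ (Fin n))‖ • u := by
        rw [hud, smul_smul, mul_inv_cancel₀ hvn, one_smul]
      refine ⟨inner ℝ q u + c * ‖(v : EuclideanSpace ℝ (Fin n))‖, ?_⟩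
      rw [hvu, smul_smul] at hc'
      rw [add_smul, hc']
      abel
    · rintro ⟨s, rfl⟩
      have := AffineSubspace.vadd_mem_of_mem_direction
        (ℓ.direction.smul_mem (s - inner ℝ q u) hudir) hq
      rw [vadd_eq_add, sub_smul] at this
      convert this using 1
      abel

lemma volume_chord_le {n : ℕ} {t : ℝ} (ht : 0 ≤ t) {p u : EuclideanSpace ℝ (Fin n)} (hp : ‖p‖ = t)
    (hu : ‖u‖ = 1) (hpu : inner ℝ p u = 0) :
    volume {s : ℝ | ∑ k, |p k + s * u k| ≤ 1} ≤ ENNReal.ofReal (maxChord t) := by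
  have hp' : ∑ i, p i ^ 2 = t ^ 2 := by rw [← hp, EuclideanSpace.real_norm_sq_eq]
  have hu' : ∑ i, u i ^ 2 = 1 := by rw [← EuclideanSpace.real_norm_sq_eq, hu, one_pow]
  have hpu' : ∑ i, p i * u i = 0 := by
    rw [← hpu, PiLp.inner_apply]
    exact Finset.sum_congr rfl fun i _ => by simp [mul_comm]
  have hle : ∀ s₁ s₂ : ℝ, ∑ k, |p k + s₁ * u k| ≤ 1 → ∑ k, |p k + s₂ * u k| ≤ 1 →
      s₂ - s₁ ≤ maxChord t := fun s₁ s₂ h₁ h₂ =>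
    (le_or_gt (2 * t ^ 2) 1).elim (fun h => chord_le_of_small ht h hp' hu' hpu' h₁ h₂)
      fun h => chord_le_of_large ht h hp' hu' hpu' h₁ h₂
  refine (Real.volume_le_diam _).trans (ediam_le fun a ha b hb => ?_)
  rw [edist_dist, Real.dist_eq]
  exact ENNReal.ofReal_le_ofReal (abs_le'.2 ⟨hle b a hb ha, by linarith [hle a b ha hb]⟩)

/-! ### The maximal sections -/

theorem stmt1 (n : ℕ) (hn : 2 ≤ n) (t : ℝ) (ht : t ∈ Set.Icc (0:ℝ) 1) :
    ∃ (i j : Fin n), i ≠ j ∧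
      ∃ ℓ : AffineSubspace ℝ (EuclideanSpace ℝ (Fin n)),
        Module.finrank ℝ ℓ.direction = 1 ∧
        (ℓ : Set (EuclideanSpace ℝ (Fin n))) ⊆
          (Submodule.span ℝ {EuclideanSpace.single i (1:ℝ),
            EuclideanSpace.single j (1:ℝ)} : Submodule ℝ (EuclideanSpace ℝ (Fin n))) ∧
        Metric.infDist 0 (ℓ : Set (EuclideanSpace ℝ (Fin n))) = t ∧
        μH[1] ({x : EuclideanSpace ℝ (Fin n) | ∑ k, |x k| ≤ 1} ∩ ℓ) =
          ENNReal.ofReal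
            (if t ≤ 1 / Real.sqrt 2 then 2 / (t + Real.sqrt (1 - t ^ 2))
             else if t ≤ 3 / 4 then t - Real.sqrt (t ^ 2 - 1 / 2)
             else 2 - 2 * t) ∧
        ∀ ℓ' : AffineSubspace ℝ (EuclideanSpace ℝ (Fin n)),
          Module.finrank ℝ ℓ'.direction = 1 →
          Metric.infDist 0 (ℓ' : Set (EuclideanSpace ℝ (Fin n))) = t →
          μH[1] ({x : EuclideanSpace ℝ (Fin n) | ∑ k, |x k| ≤ 1} ∩ ℓ') ≤
            μH[1] ({x : EuclideanSpace ℝ (Fin n) | ∑ k, |x k| ≤ 1} ∩ ℓ) := by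
  obtain ⟨c, d, m, hcd, hs⟩ := exists_planar_chord_s1 ht.1 ht.2
  set i : Fin n := ⟨0, by omega⟩
  set j : Fin n := ⟨1, by omega⟩
  have hij : i ≠ j := by simp [i, j, Fin.ext_iff]
  set e : EuclideanSpace ℝ (Fin n) := EuclideanSpace.single i (1 : ℝ) with he
  set f : EuclideanSpace ℝ (Fin n) := EuclideanSpace.single j (1 : ℝ) with hf
  have hee : inner ℝ e e = (1 : ℝ) := by simp [he]
  have hff : inner ℝ f f = (1 : ℝ) := by simp [hf]
  have hef : inner ℝ e f = (0 : ℝ) := by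
    rw [he, hf, EuclideanSpace.inner_single_left]; simp [hij]
  have hfe : inner ℝ f e = (0 : ℝ) := by rw [real_inner_comm, hef]
  set p := (t * c) • e + (t * d) • f with hpd
  set u := (-d) • e + c • f with hud
  have hp : ‖p‖ = t := by
    rw [← sq_eq_sq₀ (norm_nonneg _) ht.1, ← real_inner_self_eq_norm_sq, hpd]
    simp only [inner_add_left, inner_add_right, real_inner_smul_left, real_inner_smul_right,
      hee, hff, hef, hfe]
    linear_combination t ^ 2 * hcd
  have hu : ‖u‖ = 1 := by
    rw [← sq_eq_sq₀ (norm_nonneg _) zero_le_one, ← real_inner_self_eq_norm_sq, hud]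
    simp only [inner_add_left, inner_add_right, real_inner_smul_left, real_inner_smul_right,
      hee, hff, hef, hfe]
    linear_combination hcd
  have hpu : inner ℝ p u = 0 := by
    rw [hpd, hud]
    simp only [inner_add_left, inner_add_right, real_inner_smul_left, real_inner_smul_right,
      hee, hff, hef, hfe]
    ring
  set ℓ := AffineSubspace.mk' p (Submodule.span ℝ {u}) with hℓd
  have hℓ : (ℓ : Set (EuclideanSpace ℝ (Fin n))) = range fun s : ℝ => p + s • u := by
    ext x
    simp only [hℓd, SetLike.mem_coe, AffineSubspace.mem_mk', vsub_eq_sub,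
      Submodule.mem_span_singleton, mem_range]
    exact exists_congr fun s => by rw [eq_sub_iff_add_eq, add_comm]
  have hval : μH[1] ({x : EuclideanSpace ℝ (Fin n) | ∑ k, |x k| ≤ 1} ∩ ℓ) =
      ENNReal.ofReal (maxChord t) := by
    rw [hℓ, hausdorff_line p u hu]
    refine le_antisymm (volume_chord_le ht.1 hp hu hpu) ?_
    have hsub : Icc m (m + maxChord t) ⊆ {s : ℝ | ∑ k, |p k + s * u k| ≤ 1} := by
      intro s hsm
      refine le_trans (le_of_eq ?_) (hs s hsm)
      rw [Finset.sum_eq_add i j hij (fun k _ hk => by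
        simp [hpd, hud, he, hf, hk.1, hk.2]) (by simp) (by simp)]
      simp [hpd, hud, he, hf, hij, hij.symm, sub_eq_add_neg]
    calc ENNReal.ofReal (maxChord t) = volume (Icc m (m + maxChord t)) := by
          rw [Real.volume_Icc, add_sub_cancel_left]
      _ ≤ _ := measure_mono hsub
  refine ⟨i, j, hij, ℓ, ?_, ?_, ?_, hval, ?_⟩
  · rw [hℓd, AffineSubspace.direction_mk']
    exact finrank_span_singleton (by rw [← norm_ne_zero_iff, hu]; exact one_ne_zero)
  · rw [hℓ]
    rintro _ ⟨s, rfl⟩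
    have h1 : e ∈ Submodule.span ℝ {e, f} := Submodule.subset_span (by simp)
    have h2 : f ∈ Submodule.span ℝ {e, f} := Submodule.subset_span (by simp)
    exact add_mem (add_mem (Submodule.smul_mem _ _ h1) (Submodule.smul_mem _ _ h2))
      (Submodule.smul_mem _ _ (add_mem (Submodule.smul_mem _ _ h1) (Submodule.smul_mem _ _ h2)))
  · rw [hℓ, infDist_line hpu, hp]
  · intro ℓ' hdim hdist
    obtain ⟨p', u', hu', hpu', hℓ'⟩ := exists_param hdim
    rw [hℓ', infDist_line hpu'] at hdist
    rw [hval, hℓ', hausdorff_line p' u' hu']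
    exact volume_chord_le ht.1 hdist hu' hpu'
end

section
/- For n ≥ 2 and k = 0, 1, …, n−1, let T_n(k) = (√((k+1)(n−k)) + √(k(n−k−1))) / (n(√k + √(k+1))). Then T_n(0) = 1/√n and T_n(0) > T_n(1) > T_n(2) > ⋯ > T_n(n−1) > 0. -/
/-!
By `√((k+1)(n-k)) = √(k+1)·√(n-k)` and `√(k(n-k-1)) = √k·√(n-k-1)`, the number `n * T k` is the
average of `√(n-k)` and `√(n-k-1)` with weights proportional to `√(k+1) > 0` and `√k`. Hence
`√(n-k-1) < n * T k ≤ √(n-k)` for `k ≤ n-1`. Since `√(n-k-1)` is also the upper bound for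
`n * T (k+1)`, the sequence strictly decreases, and the strict lower bound makes it positive.
-/

/-- A weighted average of `√y` and `√(y-1)` in which `√y` has positive weight lies strictly above
`√(y-1)` and does not exceed `√y`. -/
lemma sqrt_average_bounds {x y : ℝ} (hx : 0 ≤ x) (hy : 1 ≤ y) :
    √(y - 1) < (√((x + 1) * y) + √(x * (y - 1))) / (√x + √(x + 1)) ∧
      (√((x + 1) * y) + √(x * (y - 1))) / (√x + √(x + 1)) ≤ √y := by
  have ha : 0 ≤ √x := Real.sqrt_nonneg x
  have hb : 0 < √(x + 1) := Real.sqrt_pos.2 (by linarith)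
  have hdc : √(y - 1) < √y := Real.sqrt_lt_sqrt (by linarith) (by linarith)
  rw [Real.sqrt_mul (by linarith), Real.sqrt_mul hx, lt_div_iff₀ (by positivity),
    div_le_iff₀ (by positivity)]
  constructor
  · nlinarith [mul_lt_mul_of_pos_left hdc hb]
  · nlinarith [mul_le_mul_of_nonneg_left hdc.le ha]

theorem stmt2 (n : ℕ) (hn : 2 ≤ n) (T : ℕ → ℝ)
    (hT : ∀ k : ℕ, T k =
      (Real.sqrt (((k:ℝ) + 1) * ((n:ℝ) - k)) + Real.sqrt ((k:ℝ) * ((n:ℝ) - k - 1))) /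
        ((n:ℝ) * (Real.sqrt (k:ℝ) + Real.sqrt ((k:ℝ) + 1)))) :
    T 0 = 1 / Real.sqrt n ∧ (∀ k : ℕ, k + 1 ≤ n - 1 → T (k + 1) < T k) ∧ 0 < T (n - 1) := by
  have hn0 : (0 : ℝ) < n := by exact_mod_cast (by omega : 0 < n)
  have key : ∀ k : ℕ, k + 1 ≤ n →
      √((n:ℝ) - k - 1) < n * T k ∧ n * T k ≤ √((n:ℝ) - k) := by
    intro k hk
    have hk' : (k : ℝ) + 1 ≤ n := by exact_mod_cast hk
    have h := sqrt_average_bounds (x := k) (y := (n:ℝ) - k) (by positivity) (by linarith)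
    rwa [hT k, ← mul_div_assoc, mul_div_mul_left _ _ hn0.ne']
  refine ⟨?_, fun k hk => ?_, ?_⟩
  · rw [hT 0]
    simp [Real.sqrt_div_self]
  · have h1 := (key k (by omega)).1
    have h2 := (key (k + 1) (by omega)).2
    rw [Nat.cast_add_one, ← sub_sub] at h2
    exact lt_of_mul_lt_mul_left (h2.trans_lt h1) hn0.le
  · have h := (Real.sqrt_nonneg _).trans_lt (key (n - 1) (by omega)).1
    exact pos_of_mul_pos_right h hn0.le
end

section
/- Let n ≥ 2, k ∈ {1, …, n−1}, and t ∈ [0, 1/√(n−k)]. Set u_k = (1/k)∑_{i=1}^k e_i and v_k = (1/(n−k))∑_{i=k+1}^n e_i, and let a = (1 − t√(n−k)) u_k + t√(n−k) v_k and b = −(1 − t√(n−k)) u_k + t√(n−k) v_k. Then a and b lie in the cross-polytope B_1^n, the line through a and b is at distance t from the origin, and |a − b| = 2(1 − t√(n−k))/√k. -/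
open MeasureTheory Metric Set

/-!
The vectors `u` and `v` have disjoint supports, of sizes `k` and `n - k`, and constant coordinates
there, so `‖u‖ ^ 2 = 1 / k`, `‖v‖ ^ 2 = 1 / (n - k)` and `⟪u, v⟫ = 0`. With `s = t * √(n - k)`, which
lies in `[0, 1]`, both `a` and `b` have `ℓ¹`-norm `(1 - s) + s = 1`, and `a - b = (2 * (1 - s)) • u`.
Every point of the line through `a` and `b` has the form `c • u + s • v`, so by Pythagoras its norm
is at least `‖s • v‖ = t`; the midpoint `s • v` of `a` and `b` attains this bound.
-/

lemma sum_fin_ite_lt (n k : ℕ) (h : k ≤ n) (x y : ℝ) :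
    ∑ i : Fin n, (if (i : ℕ) < k then x else y) = k * x + ((n : ℝ) - k) * y := by
  obtain ⟨m, rfl⟩ := Nat.exists_eq_add_of_le h
  simp [Fin.sum_univ_add]

/-- A line with direction `u ⟂ v` through `c • u + s • v` and `-c • u + s • v` is at distance
`‖s • v‖` from the origin. The case `c • u = 0`, where the line is a single point, is included. -/
lemma infDist_affineSpan_pair_of_inner_eq_zero {E : Type*} [NormedAddCommGroup E]
    [InnerProductSpace ℝ E] (u v : E) (c s : ℝ) (huv : inner ℝ u v = 0) :
    Metric.infDist 0 (affineSpan ℝ {c • u + s • v, -c • u + s • v} : Set E) = ‖s • v‖ := by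
  have hmem : s • v ∈ (affineSpan ℝ {c • u + s • v, -c • u + s • v} : Set E) := by
    rw [SetLike.mem_coe, mem_affineSpan_pair_iff_exists_lineMap_eq]
    refine ⟨1 / 2, ?_⟩
    rw [AffineMap.lineMap_apply_module]
    module
  apply le_antisymm
  · simpa using Metric.infDist_le_dist_of_mem (x := (0 : E)) hmem
  · rw [Metric.le_infDist ⟨_, hmem⟩]
    intro p hp
    rw [SetLike.mem_coe, mem_affineSpan_pair_iff_exists_lineMap_eq] at hp
    obtain ⟨r, rfl⟩ := hp
    have h1 : AffineMap.lineMap (c • u + s • v) (-c • u + s • v) r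
        = ((1 - 2 * r) * c) • u + s • v := by
      rw [AffineMap.lineMap_apply_module]
      module
    have h2 := norm_add_sq_eq_norm_sq_add_norm_sq_real (x := ((1 - 2 * r) * c) • u)
      (y := s • v) (by simp [inner_smul_left, inner_smul_right, huv])
    rw [h1, dist_zero_left]
    refine abs_le_of_sq_le_sq' ?_ (norm_nonneg _) |>.2
    nlinarith [norm_nonneg (((1 - 2 * r) * c) • u)]

theorem stmt4 (n k : ℕ) (hn : 2 ≤ n) (hk1 : 1 ≤ k) (hk2 : k ≤ n - 1)
    (t : ℝ) (ht : t ∈ Set.Icc 0 (1 / Real.sqrt ((n:ℝ) - k)))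
    (u v a b : EuclideanSpace ℝ (Fin n))
    (hu : ∀ i : Fin n, u i = if (i : ℕ) < k then 1 / (k:ℝ) else 0)
    (hv : ∀ i : Fin n, v i = if (i : ℕ) < k then 0 else 1 / ((n:ℝ) - k))
    (ha : a = (1 - t * Real.sqrt ((n:ℝ) - k)) • u + (t * Real.sqrt ((n:ℝ) - k)) • v)
    (hb : b = -(1 - t * Real.sqrt ((n:ℝ) - k)) • u + (t * Real.sqrt ((n:ℝ) - k)) • v) :
    (∑ i, |a i| ≤ 1) ∧ (∑ i, |b i| ≤ 1) ∧
    Metric.infDist 0 (affineSpan ℝ {a, b} : Set (EuclideanSpace ℝ (Fin n))) = t ∧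
    ‖a - b‖ = 2 * (1 - t * Real.sqrt ((n:ℝ) - k)) / Real.sqrt k := by
  have hkn : k < n := by omega
  have hk : (0 : ℝ) < k := by exact_mod_cast hk1
  have hm : (0 : ℝ) < (n : ℝ) - k := sub_pos.mpr (by exact_mod_cast hkn)
  have hq : 0 < Real.sqrt ((n : ℝ) - k) := Real.sqrt_pos.mpr hm
  obtain ⟨ht0, ht1⟩ := ht
  have hs1 : t * Real.sqrt ((n : ℝ) - k) ≤ 1 := (le_div_iff₀ hq).mp ht1
  have hs0 : 0 ≤ t * Real.sqrt ((n : ℝ) - k) := by positivity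
  have huv : inner ℝ u v = 0 := by
    rw [PiLp.inner_apply]
    refine Finset.sum_eq_zero fun i _ => ?_
    rw [hu, hv]
    split_ifs <;> simp
  have hnu : ‖u‖ = 1 / Real.sqrt k := by
    have h : ∀ i, ‖u i‖ ^ 2 = if (i : ℕ) < k then (1 / (k : ℝ)) ^ 2 else 0 := by
      intro i
      rw [hu]
      split_ifs <;> simp
    rw [EuclideanSpace.norm_eq, Finset.sum_congr rfl fun i _ => h i, sum_fin_ite_lt n k hkn.le,
      ← Real.sqrt_one, ← Real.sqrt_div zero_le_one]
    congr 1
    field_simp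
    simp
  have hnv : ‖v‖ = 1 / Real.sqrt ((n : ℝ) - k) := by
    have h : ∀ i, ‖v i‖ ^ 2 = if (i : ℕ) < k then 0 else (1 / ((n : ℝ) - k)) ^ 2 := by
      intro i
      rw [hv]
      split_ifs <;> simp
    rw [EuclideanSpace.norm_eq, Finset.sum_congr rfl fun i _ => h i, sum_fin_ite_lt n k hkn.le,
      ← Real.sqrt_one, ← Real.sqrt_div zero_le_one]
    congr 1
    field_simp
    simp
  have hl1 : ∀ c s : ℝ, |c| + |s| = 1 → ∑ i, |(c • u + s • v) i| ≤ 1 := by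
    intro c s hcs
    have h : ∀ i, |(c • u + s • v) i|
        = if (i : ℕ) < k then |c| / (k : ℝ) else |s| / ((n : ℝ) - k) := by
      intro i
      rw [PiLp.add_apply, PiLp.smul_apply, PiLp.smul_apply, hu, hv]
      split_ifs
      · simp [abs_mul, abs_of_pos hk, div_eq_mul_inv]
      · simp [abs_mul, abs_of_pos hm, div_eq_mul_inv]
    rw [Finset.sum_congr rfl fun i _ => h i, sum_fin_ite_lt n k hkn.le,
      mul_div_cancel₀ _ hk.ne', mul_div_cancel₀ _ hm.ne', hcs]
  refine ⟨?_, ?_, ?_, ?_⟩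
  · rw [ha]
    apply hl1
    rw [abs_of_nonneg (sub_nonneg.mpr hs1), abs_of_nonneg hs0]
    ring
  · rw [hb]
    apply hl1
    rw [abs_neg, abs_of_nonneg (sub_nonneg.mpr hs1), abs_of_nonneg hs0]
    ring
  · rw [ha, hb, infDist_affineSpan_pair_of_inner_eq_zero u v _ _ huv, norm_smul, hnv,
      Real.norm_of_nonneg hs0]
    field_simp
  · have h : a - b = (2 * (1 - t * Real.sqrt ((n : ℝ) - k))) • u := by
      rw [ha, hb]
      module
    rw [h, norm_smul, hnu, Real.norm_of_nonneg (by linarith)]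
    ring
end

section
/- Suppose x and y are distinct vectors in ℝ^n such that ⟨x, y⟩ ≤ 0, |x| ≤ 1 and |y| ≤ 1. Then (|x|²|y|² − ⟨x,y⟩²) / |x − y|² ≤ 1/2; equivalently, the line passing through x and y is at distance at most 1/√2 from the origin. -/
/-!
Write `c = ⟪x, y⟫ ≤ 0`, so that `‖x - y‖² = ‖x‖² + ‖y‖² - 2c ≥ ‖x‖² + ‖y‖²`. As `‖x‖, ‖y‖ ≤ 1`,
we have `2‖x‖²‖y‖² ≤ ‖x‖² + ‖y‖²`, and the bound on the quotient follows. The quotient is the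
squared norm of the foot of the perpendicular from the origin to the line through `x` and `y`
(`norm_sq_foot`), which gives the bound on the distance.
-/

open MeasureTheory Metric Set

/-- The foot of the perpendicular from the origin to the line through `x` and `y` has squared norm
equal to the Gram determinant of `x, y` divided by `‖x - y‖²`. -/
theorem norm_sq_foot {E : Type*} [NormedAddCommGroup E] [InnerProductSpace ℝ E] {x y : E}
    (hxy : x ≠ y) :
    ‖AffineMap.lineMap (k := ℝ) x y ((‖x‖ ^ 2 - inner ℝ x y) / ‖x - y‖ ^ 2)‖ ^ 2 =
      (‖x‖ ^ 2 * ‖y‖ ^ 2 - inner ℝ x y ^ 2) / ‖x - y‖ ^ 2 := by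
  have hd : ‖x - y‖ ^ 2 ≠ 0 := by simpa [sub_eq_zero] using hxy
  have hd' := norm_sub_sq_real x y
  set t := (‖x‖ ^ 2 - inner ℝ x y) / ‖x - y‖ ^ 2 with ht
  have htd : t * ‖x - y‖ ^ 2 = ‖x‖ ^ 2 - inner ℝ x y := div_mul_cancel₀ _ hd
  have h : ‖AffineMap.lineMap (k := ℝ) x y t‖ ^ 2 =
      ‖x‖ ^ 2 - 2 * (t * (‖x‖ ^ 2 - inner ℝ x y)) + t ^ 2 * ‖x - y‖ ^ 2 := by
    have e : AffineMap.lineMap (k := ℝ) x y t = x - t • (x - y) := by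
      rw [AffineMap.lineMap_apply_module']
      module
    rw [e, norm_sub_sq_real, norm_smul, inner_smul_right, inner_sub_right,
      real_inner_self_eq_norm_sq, mul_pow, Real.norm_eq_abs, sq_abs]
  rw [h, eq_div_iff hd]
  linear_combination (t * ‖x - y‖ ^ 2 - (‖x‖ ^ 2 - inner ℝ x y)) * htd + ‖x‖ ^ 2 * hd'

theorem stmt9 (n : ℕ) (x y : EuclideanSpace ℝ (Fin n)) (hxy : x ≠ y)
    (hinner : ∑ i, x i * y i ≤ 0) (hx : ‖x‖ ≤ 1) (hy : ‖y‖ ≤ 1) :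
    (‖x‖ ^ 2 * ‖y‖ ^ 2 - (∑ i, x i * y i) ^ 2) / ‖x - y‖ ^ 2 ≤ 1 / 2 ∧
    Metric.infDist 0 (affineSpan ℝ {x, y} : Set (EuclideanSpace ℝ (Fin n))) ≤
      1 / Real.sqrt 2 := by
  have hc : ∑ i, x i * y i = inner ℝ x y := by
    simp [PiLp.inner_apply, mul_comm]
  rw [hc] at hinner ⊢
  have hquot : (‖x‖ ^ 2 * ‖y‖ ^ 2 - inner ℝ x y ^ 2) / ‖x - y‖ ^ 2 ≤ 1 / 2 := by
    have hpos : 0 < ‖x - y‖ ^ 2 := by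
      have := norm_pos_iff.2 (sub_ne_zero.2 hxy)
      positivity
    have hx2 : ‖x‖ ^ 2 ≤ 1 := pow_le_one₀ (norm_nonneg x) hx
    have hy2 : ‖y‖ ^ 2 ≤ 1 := pow_le_one₀ (norm_nonneg y) hy
    rw [div_le_iff₀ hpos, norm_sub_sq_real]
    have h1 := mul_le_of_le_one_right (sq_nonneg ‖x‖) hy2
    have h2 := mul_le_of_le_one_left (sq_nonneg ‖y‖) hx2
    linarith [sq_nonneg (inner ℝ x y)]
  refine ⟨hquot, ?_⟩
  refine (Metric.infDist_le_dist_of_mem (AffineMap.lineMap_mem_affineSpan_pair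
    ((‖x‖ ^ 2 - inner ℝ x y) / ‖x - y‖ ^ 2) x y)).trans ?_
  rw [dist_zero_left]
  refine (sq_le_sq₀ (norm_nonneg _) (by positivity)).1 ?_
  rw [norm_sq_foot hxy, div_pow, Real.sq_sqrt zero_le_two, one_pow]
  exact hquot
end

section
/- Let u, v > 0 and t ∈ [0, uv/√(u²+v²)], and consider the isosceles triangle conv{−u·e_1, u·e_1, v·e_2} in ℝ². For any segment whose endpoints a and b lie on the half-open legs [u·e_1, v·e_2) and [−u·e_1, v·e_2) respectively and whose supporting line is at distance t from the origin, one has |a − b| ≥ 2(v − t)·u/v, with equality if and only if the segment is parallel to the base [−u·e_1, u·e_1]. -/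
/-!
Write `a = (u p, v (1 - p))` and `b = (-u q, v (1 - q))` with `0 < p, q`, and put `s = p + q`,
`d = p - q`, `w = u² + v²`, `L = ‖a - b‖`. Then `L² = u² s² + v² d²`, and the distance `t` of the
line to the origin satisfies `L t = |a × b| = u v (s - 2 p q)` (`norm_mul_infDist`, `core`).

Substituting, `L (L - 2 (v - t) u / v) = 2 u (K - L)` with `K = u s + w d² / (2 u)`, and
`K² - L² = d² (w s - v²) + w² d⁴ / (4 u²)`. The hypothesis `t ≤ u v / √w`, squared and multiplied
by `L²`, reduces after division by `4 p q` to `v² ≤ w (s - p q)`, so that `v² < w s`. Hence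
`L ≤ K`, with equality exactly when `d = 0`, i.e. when the segment is horizontal.
-/

/-- Base times height: the length of `ab` times the distance of the line `ab` to the origin is
the absolute value of the determinant of `a` and `b`. -/
lemma norm_mul_infDist (a b : EuclideanSpace ℝ (Fin 2)) (hab : a ≠ b) :
    ‖a - b‖ * Metric.infDist 0 (affineSpan ℝ {a, b} : Set (EuclideanSpace ℝ (Fin 2)))
      = |a 0 * b 1 - a 1 * b 0| := by
  have hn : ∀ x : EuclideanSpace ℝ (Fin 2), ‖x‖ ^ 2 = x 0 ^ 2 + x 1 ^ 2 := by
    intro x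
    simp [EuclideanSpace.norm_sq_eq, Fin.sum_univ_two]
  have hL : 0 < ‖a - b‖ := norm_pos_iff.2 (sub_ne_zero.2 hab)
  have hL2 : ‖a - b‖ ^ 2 = (a 0 - b 0) ^ 2 + (a 1 - b 1) ^ 2 := by
    rw [hn]; simp
  apply le_antisymm
  · -- the foot of the perpendicular from the origin realises the distance
    set D : ℝ := (a 0 - b 0) ^ 2 + (a 1 - b 1) ^ 2 with hD
    have hD0 : D ≠ 0 := by rw [← hL2]; positivity
    set r : ℝ := -(a 0 * (b 0 - a 0) + a 1 * (b 1 - a 1)) / D with hr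
    have hrD : r * D = -(a 0 * (b 0 - a 0) + a 1 * (b 1 - a 1)) := div_mul_cancel₀ _ hD0
    have h1 : Metric.infDist 0 (affineSpan ℝ {a, b} : Set (EuclideanSpace ℝ (Fin 2)))
        ≤ ‖AffineMap.lineMap a b r‖ := by
      have := Metric.infDist_le_dist_of_mem (x := (0 : EuclideanSpace ℝ (Fin 2)))
        (AffineMap.lineMap_mem_affineSpan_pair r a b)
      rwa [dist_zero_left] at this
    refine (mul_le_mul_of_nonneg_left h1 hL.le).trans (le_of_eq ?_)
    rw [← abs_of_nonneg (mul_nonneg hL.le (norm_nonneg _)), ← sq_eq_sq_iff_abs_eq_abs, mul_pow,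
      hL2, hn]
    simp only [AffineMap.lineMap_apply, vsub_eq_sub, vadd_eq_add, PiLp.add_apply, PiLp.smul_apply,
      PiLp.sub_apply, smul_eq_mul]
    linear_combination (r * D + (a 0 * (b 0 - a 0) + a 1 * (b 1 - a 1))) * hrD
  · rw [← div_le_iff₀' hL]
    refine (Metric.le_infDist ⟨a, left_mem_affineSpan_pair ℝ a b⟩).2 fun x hx => ?_
    obtain ⟨r, rfl⟩ := mem_affineSpan_pair_iff_exists_lineMap_eq.1 hx
    rw [div_le_iff₀ hL, dist_zero_left]
    refine abs_le_of_sq_le_sq ?_ (by positivity)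
    rw [mul_pow, hL2, hn]
    simp only [AffineMap.lineMap_apply, vsub_eq_sub, vadd_eq_add, PiLp.add_apply, PiLp.smul_apply,
      PiLp.sub_apply, smul_eq_mul]
    -- Cauchy-Schwarz: the defect is the square of the inner product of the point with `a - b`
    nlinarith [sq_nonneg ((r * (b 0 - a 0) + a 0) * (b 0 - a 0)
      + (r * (b 1 - a 1) + a 1) * (b 1 - a 1))]

/-- The inequality in the coordinates `p`, `q` along the legs, with `L` the length of the
segment. -/
lemma core {u v t p q L : ℝ} (hu : 0 < u) (hv : 0 < v) (ht0 : 0 ≤ t)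
    (ht : t ≤ u * v / Real.sqrt (u ^ 2 + v ^ 2)) (hp : 0 < p) (hq : 0 < q) (hL : 0 < L)
    (hL2 : L ^ 2 = u ^ 2 * (p + q) ^ 2 + v ^ 2 * (p - q) ^ 2)
    (hLt : L * t = u * v * (p + q - 2 * p * q)) :
    2 * (v - t) * u / v ≤ L ∧ (L = 2 * (v - t) * u / v ↔ p = q) := by
  have hw : 0 < u ^ 2 + v ^ 2 := by positivity
  have ht2 : t ^ 2 * (u ^ 2 + v ^ 2) ≤ (u * v) ^ 2 := by
    have h := (le_div_iff₀ (Real.sqrt_pos.2 hw)).1 ht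
    have h2 := pow_le_pow_left₀ (by positivity) h 2
    rwa [mul_pow, Real.sq_sqrt hw.le] at h2
  have hkey : v ^ 2 ≤ (u ^ 2 + v ^ 2) * (p + q - p * q) := by
    have h1 : (L * t) ^ 2 * (u ^ 2 + v ^ 2) ≤ (u * v) ^ 2 * L ^ 2 := by
      nlinarith [mul_le_mul_of_nonneg_left ht2 (sq_nonneg L)]
    rw [hLt, hL2] at h1
    have h2 : ((u * v) ^ 2 * (4 * (p * q))) * v ^ 2
        ≤ ((u * v) ^ 2 * (4 * (p * q))) * ((u ^ 2 + v ^ 2) * (p + q - p * q)) := by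
      linarith
    exact le_of_mul_le_mul_left h2 (by positivity)
  have hstrict : v ^ 2 < (u ^ 2 + v ^ 2) * (p + q) := by
    nlinarith [mul_pos hw (mul_pos hp hq)]
  set K : ℝ := u * (p + q) + (u ^ 2 + v ^ 2) * (p - q) ^ 2 / (2 * u) with hK
  have hK0 : 0 < K := by positivity
  have hKL : K ^ 2 - L ^ 2 = (p - q) ^ 2 * ((u ^ 2 + v ^ 2) * (p + q) - v ^ 2)
      + ((u ^ 2 + v ^ 2) * (p - q) ^ 2 / (2 * u)) ^ 2 := by
    rw [hL2, hK]; field_simp; ring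
  have hid : L * (L - 2 * (v - t) * u / v) = 2 * u * (K - L) := by
    have h1 : L * (L - 2 * (v - t) * u / v) = L ^ 2 - 2 * u * L + 2 * u / v * (L * t) := by
      field_simp; ring
    rw [h1, hLt, hL2, hK]; field_simp; ring
  have hs : 0 < (u ^ 2 + v ^ 2) * (p + q) - v ^ 2 := sub_pos.2 hstrict
  have hle : L ≤ K := by
    refine (sq_le_sq₀ hL.le hK0.le).1 ?_
    have : 0 ≤ K ^ 2 - L ^ 2 := by rw [hKL]; positivity
    linarith
  refine ⟨?_, ?_, ?_⟩
  · have : 0 ≤ L * (L - 2 * (v - t) * u / v) := by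
      rw [hid]; exact mul_nonneg (by positivity) (sub_nonneg.2 hle)
    exact sub_nonneg.1 (nonneg_of_mul_nonneg_right this hL)
  · intro h
    rw [← h, sub_self, mul_zero] at hid
    have hKe : K - L = 0 := by
      rcases mul_eq_zero.1 hid.symm with h0 | h0
      · linarith
      · exact h0
    by_contra hne
    have hd : p - q ≠ 0 := sub_ne_zero.2 hne
    have : 0 < K ^ 2 - L ^ 2 := by rw [hKL]; positivity
    rw [sub_eq_zero.1 hKe, sub_self] at this
    exact lt_irrefl _ this
  · rintro rfl
    have hKe : K = L := by
      have h0 : K ^ 2 - L ^ 2 = 0 := by rw [hKL]; simp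
      exact (pow_left_inj₀ hK0.le hL.le two_ne_zero).1 (sub_eq_zero.1 h0)
    rw [hKe, sub_self, mul_zero] at hid
    exact sub_eq_zero.1 ((mul_eq_zero.1 hid).resolve_left hL.ne')


open MeasureTheory Metric Set

theorem stmt10 (u v t : ℝ) (hu : 0 < u) (hv : 0 < v)
    (ht : t ∈ Set.Icc 0 (u * v / Real.sqrt (u ^ 2 + v ^ 2)))
    (P Q R a b : EuclideanSpace ℝ (Fin 2))
    (hP : P 0 = u ∧ P 1 = 0) (hQ : Q 0 = -u ∧ Q 1 = 0) (hR : R 0 = 0 ∧ R 1 = v)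
    (haseg : a ∈ segment ℝ P R ∧ a ≠ R)
    (hbseg : b ∈ segment ℝ Q R ∧ b ≠ R)
    (hdist : Metric.infDist 0 (affineSpan ℝ {a, b} : Set (EuclideanSpace ℝ (Fin 2))) = t) :
    2 * (v - t) * u / v ≤ ‖a - b‖ ∧
    (‖a - b‖ = 2 * (v - t) * u / v ↔ a 1 = b 1) := by
  obtain ⟨⟨p, p', hp, hp', hpp, rfl⟩, haR⟩ := haseg
  obtain ⟨⟨q, q', hq, hq', hqq, rfl⟩, hbR⟩ := hbseg
  have hp0 : 0 < p := by
    refine lt_of_le_of_ne hp fun h => haR ?_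
    subst h
    simp [show p' = 1 by linarith]
  have hq0 : 0 < q := by
    refine lt_of_le_of_ne hq fun h => hbR ?_
    subst h
    simp [show q' = 1 by linarith]
  obtain rfl : p' = 1 - p := by linarith
  obtain rfl : q' = 1 - q := by linarith
  set a : EuclideanSpace ℝ (Fin 2) := p • P + (1 - p) • R with ha
  set b : EuclideanSpace ℝ (Fin 2) := q • Q + (1 - q) • R with hb
  have ha0 : a 0 = u * p := by simp [ha, hP, hR, mul_comm]
  have ha1 : a 1 = v * (1 - p) := by simp [ha, hP, hR, mul_comm]
  have hb0 : b 0 = -(u * q) := by simp [hb, hQ, hR, mul_comm]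
  have hb1 : b 1 = v * (1 - q) := by simp [hb, hQ, hR, mul_comm]
  have hab : a ≠ b := by
    intro h
    rw [h, hb0] at ha0
    nlinarith [mul_pos hu hp0, mul_pos hu hq0]
  have hL : 0 < ‖a - b‖ := norm_pos_iff.2 (sub_ne_zero.2 hab)
  have hL2 : ‖a - b‖ ^ 2 = u ^ 2 * (p + q) ^ 2 + v ^ 2 * (p - q) ^ 2 := by
    rw [EuclideanSpace.norm_sq_eq, Fin.sum_univ_two]
    simp only [PiLp.sub_apply, Real.norm_eq_abs, sq_abs, ha0, ha1, hb0, hb1]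
    ring
  have hLt : ‖a - b‖ * t = u * v * (p + q - 2 * p * q) := by
    have h := norm_mul_infDist a b hab
    rw [hdist, ha0, ha1, hb0, hb1] at h
    have h1 : u * p * (v * (1 - q)) - v * (1 - p) * -(u * q) = u * v * (p + q - 2 * p * q) := by
      ring
    rw [h, h1, abs_of_nonneg]
    have : 0 ≤ p * (1 - q) + q * (1 - p) := by positivity
    exact mul_nonneg (by positivity) (by linarith)
  obtain ⟨h1, h2⟩ := core hu hv ht.1 ht.2 hp0 hq0 hL hL2 hLt
  refine ⟨h1, h2.trans ?_⟩
  rw [ha1, hb1, mul_right_inj' hv.ne', sub_right_inj]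
end

section
/- Let n ≥ 3, t ∈ (1/√2, 1), and let a be a unit vector in ℝ^n with a_1 > t. Then the n-dimensional Lebesgue measure of the chopped-off part S = B_1^n ∩ {x ∈ ℝ^n : ⟨x, a⟩ ≥ t} equals 2^{n−1}(a_1 − t)^n a_1^{n−2} / (n! · ∏_{i=2}^n (a_1² − a_i²)). -/
open MeasureTheory Metric Set
open scoped ENNReal

/-!
Write `x = (x₀, y)` and `A = a₀`. As `A > t > 1/√2` and `‖a‖ = 1`, every other coordinate of `a`
satisfies `|aᵢ| < t < A`. This forces `x₀ > 0` on the chopped-off part, so the fibre over `y` is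
the interval `(t - ∑ yᵢ aᵢ) / A ≤ x₀ ≤ 1 - ∑ |yᵢ|`, whose length is the positive part of
`((A - t) - ∑ (A |yᵢ| - aᵢ yᵢ)) / A`.

The gauge `s ↦ A |s| - b s` has slope `A - b` to the right of `0` and `-(A + b)` to the left, so
it pushes Lebesgue measure on `ℝ` forward to
`1 / (A - b) + 1 / (A + b) = 2 A / (A ^ 2 - b ^ 2)` times Lebesgue measure on `[0, ∞)`
(`lintegral_gauge_pow` is the instance needed). Integrating out the coordinates of `y` one at a
time (`lintegral_sum_gauge`) produces one such factor per coordinate, together with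
`(A - t) ^ n / n!`.
-/

/-- The integral over a half-line of a power of a decreasing affine function's positive part. -/
lemma lintegral_Ioi_pow (p c : ℝ) (hp : 0 < p) (k : ℕ) :
    ∫⁻ s in Ioi (0 : ℝ), ENNReal.ofReal ((max (c - p * s) 0) ^ (k + 1)) =
      ENNReal.ofReal ((max c 0) ^ (k + 2) / (p * (k + 2))) := by
  rcases le_or_gt c 0 with hc | hc
  · rw [max_eq_right hc, setLIntegral_congr_fun (g := fun _ => 0) measurableSet_Ioi]
    · simp
    · intro s hs
      have : c - p * s ≤ 0 := by
        have := mul_pos hp (mem_Ioi.mp hs)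
        linarith
      simp [max_eq_right this]
  · rw [max_eq_left hc.le]
    have hd : 0 < c / p := div_pos hc hp
    rw [← Ioc_union_Ioi_eq_Ioi hd.le, lintegral_union measurableSet_Ioi
      (Set.disjoint_left.mpr fun x hx hx' => absurd hx.2 (not_le.mpr hx'))]
    have h2 : ∫⁻ s in Ioi (c / p), ENNReal.ofReal ((max (c - p * s) 0) ^ (k + 1)) = 0 := by
      rw [setLIntegral_congr_fun (g := fun _ => 0) measurableSet_Ioi]
      · simp
      · intro s hs
        have : c - p * s ≤ 0 := by
          have := (div_lt_iff₀ hp).mp (mem_Ioi.mp hs)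
          linarith
        simp [max_eq_right this]
    have h1 : ∫⁻ s in Ioc 0 (c / p), ENNReal.ofReal ((max (c - p * s) 0) ^ (k + 1)) =
        ∫⁻ s in Ioc 0 (c / p), ENNReal.ofReal ((c - p * s) ^ (k + 1)) := by
      refine setLIntegral_congr_fun measurableSet_Ioc fun s hs => ?_
      have : 0 ≤ c - p * s := by
        have := (le_div_iff₀ hp).mp hs.2
        linarith
      simp only [max_eq_left this]
    rw [h2, h1, add_zero, ← ofReal_integral_eq_lintegral_ofReal,
      ← intervalIntegral.integral_of_le hd.le]
    · congr 1
      have hder : ∀ s ∈ uIcc 0 (c / p),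
          HasDerivAt (fun s => -(c - p * s) ^ (k + 2) / (p * (k + 2)))
            ((c - p * s) ^ (k + 1)) s := by
        intro s _
        have h := (((((hasDerivAt_id s).const_mul p).const_sub c).pow (k + 2)).neg).div_const
          (p * (k + 2))
        refine h.congr_deriv ?_
        have : (k : ℝ) + 2 ≠ 0 := by positivity
        push_cast [id, Nat.add_sub_cancel]
        field_simp
      rw [intervalIntegral.integral_eq_sub_of_hasDerivAt hder
        (Continuous.intervalIntegrable (by fun_prop) _ _)]
      rw [mul_div_cancel₀ _ hp.ne']
      simp
      ring
    · exact (Continuous.integrableOn_Icc (by fun_prop)).mono_set Ioc_subset_Icc_self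
    · refine (ae_restrict_iff' measurableSet_Ioc).mpr (Filter.Eventually.of_forall fun s hs => ?_)
      have : 0 ≤ c - p * s := by
        have := (le_div_iff₀ hp).mp hs.2
        linarith
      exact pow_nonneg this _

lemma lintegral_gauge_pow (A b c : ℝ) (hb : |b| < A) (k : ℕ) :
    ∫⁻ s : ℝ, ENNReal.ofReal ((max (c - (A * |s| - b * s)) 0) ^ (k + 1)) =
      ENNReal.ofReal ((max c 0) ^ (k + 2) / (k + 2) * (2 * A / (A ^ 2 - b ^ 2))) := by
  obtain ⟨hb1, hb2⟩ := abs_lt.mp hb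
  have hp : 0 < A - b := by linarith
  have hq : 0 < A + b := by linarith
  rw [← lintegral_add_compl _ (measurableSet_Ioi (a := (0 : ℝ))), compl_Ioi]
  have h1 : ∫⁻ s in Ioi (0 : ℝ), ENNReal.ofReal ((max (c - (A * |s| - b * s)) 0) ^ (k + 1)) =
      ENNReal.ofReal ((max c 0) ^ (k + 2) / ((A - b) * (k + 2))) := by
    rw [← lintegral_Ioi_pow _ c hp k]
    refine setLIntegral_congr_fun measurableSet_Ioi fun s hs => ?_
    simp only [abs_of_pos (mem_Ioi.mp hs), sub_mul]
  have h2 : ∫⁻ s in Iic (0 : ℝ), ENNReal.ofReal ((max (c - (A * |s| - b * s)) 0) ^ (k + 1)) =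
      ENNReal.ofReal ((max c 0) ^ (k + 2) / ((A + b) * (k + 2))) := by
    rw [← lintegral_Ioi_pow _ c hq k, setLIntegral_congr Iio_ae_eq_Iic.symm]
    have hm := (Measure.measurePreserving_neg (volume : Measure ℝ)).setLIntegral_comp_preimage_emb
      (MeasurableEquiv.neg ℝ).measurableEmbedding
      (fun s => ENNReal.ofReal ((max (c - (A * |s| - b * s)) 0) ^ (k + 1))) (Iio 0)
    rw [← hm]
    have : (Neg.neg ⁻¹' Iio (0 : ℝ)) = Ioi 0 := by ext; simp
    rw [this]
    refine setLIntegral_congr_fun measurableSet_Ioi fun s hs => ?_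
    simp only [abs_neg, abs_of_pos (mem_Ioi.mp hs)]
    congr 4
    ring
  rw [h1, h2, ← ENNReal.ofReal_add (by positivity) (by positivity)]
  congr 1
  have h3 : A ^ 2 - b ^ 2 = (A - b) * (A + b) := by ring
  have : (k : ℝ) + 2 ≠ 0 := by positivity
  rw [h3]
  field_simp
  ring

/-- Integrating out the first coordinate turns the power `m + 1` coming from the other `m`
coordinates into `m + 2`, which is why the one-variable integral is needed for all powers. -/
lemma lintegral_sum_gauge (A : ℝ) (m : ℕ) (b : Fin m → ℝ) (hb : ∀ i, |b i| < A) (c : ℝ) :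
    ∫⁻ y : Fin m → ℝ, ENNReal.ofReal (max (c - ∑ i, (A * |y i| - b i * y i)) 0) =
      ENNReal.ofReal ((max c 0) ^ (m + 1) / (m + 1).factorial *
        ∏ i, (2 * A / (A ^ 2 - b i ^ 2))) := by
  induction m generalizing c with
  | zero => simp [lintegral_unique, volume_pi]
  | succ m ih =>
    have hw : ∀ i, 0 ≤ 2 * A / (A ^ 2 - b i ^ 2) := fun i => by
      have h0 := (abs_nonneg (b i)).trans_lt (hb i)
      have := sq_lt_sq' (by linarith [neg_abs_le (b i), hb i] : -A < b i)
        ((le_abs_self _).trans_lt (hb i))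
      exact div_nonneg (by linarith) (by linarith)
    have hmp := (volume_preserving_piFinSuccAbove (fun _ : Fin (m + 1) => ℝ) 0).symm
    rw [← hmp.lintegral_comp_emb (MeasurableEquiv.measurableEmbedding _),
      Measure.volume_eq_prod, lintegral_prod _ (by
        apply Measurable.aemeasurable
        simp only [MeasurableEquiv.piFinSuccAbove_symm_apply]
        have : Measurable fun y : Fin (m + 1) → ℝ =>
          ENNReal.ofReal (max (c - ∑ i, (A * |y i| - b i * y i)) 0) := by fun_prop
        exact this.comp hmp.measurable)]
    have h1 : ∀ s : ℝ, ∫⁻ y : Fin m → ℝ, ENNReal.ofReal (max (c - ∑ i, (A *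
        |(MeasurableEquiv.piFinSuccAbove (fun _ : Fin (m + 1) => ℝ) 0).symm (s, y) i| - b i *
        (MeasurableEquiv.piFinSuccAbove (fun _ : Fin (m + 1) => ℝ) 0).symm (s, y) i)) 0) =
        ENNReal.ofReal ((max (c - (A * |s| - b 0 * s)) 0) ^ (m + 1)) *
          ENNReal.ofReal (1 / (m + 1).factorial *
            ∏ i : Fin m, (2 * A / (A ^ 2 - b i.succ ^ 2))) := by
      intro s
      rw [← ENNReal.ofReal_mul (by positivity)]
      convert ih (fun i => b i.succ) (fun i => hb _) (c - (A * |s| - b 0 * s)) using 2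
      · ext y
        simp only [MeasurableEquiv.piFinSuccAbove_symm_apply, Fin.insertNthEquiv_zero,
          Fin.consEquiv_apply, Fin.sum_univ_succ, Fin.cons_zero, Fin.cons_succ, sub_sub]
      · ring
    simp_rw [h1]
    rw [lintegral_mul_const _ (by fun_prop), lintegral_gauge_pow A (b 0) c (hb 0) m,
      ← ENNReal.ofReal_mul (mul_nonneg (by positivity) (hw 0))]
    congr 1
    rw [Fin.prod_univ_succ, Nat.factorial_succ (m + 1)]
    push_cast
    have : (m : ℝ) + 2 ≠ 0 := by positivity
    have : (m : ℝ) + 1 + 1 ≠ 0 := by positivity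
    have h4 : ((m + 1).factorial : ℝ) ≠ 0 := by positivity
    field_simp
    ring

lemma measurableSet_cap (A t : ℝ) (m : ℕ) (b : Fin m → ℝ) :
    MeasurableSet {z : ℝ × (Fin m → ℝ) | |z.1| + ∑ i, |z.2 i| ≤ 1 ∧
      t ≤ z.1 * A + ∑ i, z.2 i * b i} := by
  have h1 : Measurable fun z : ℝ × (Fin m → ℝ) => |z.1| + ∑ i, |z.2 i| := by fun_prop
  have h2 : Measurable fun z : ℝ × (Fin m → ℝ) => z.1 * A + ∑ i, z.2 i * b i := by fun_prop
  exact (measurableSet_le h1 measurable_const).inter (measurableSet_le measurable_const h2)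

/-- The volume of the chopped-off part of the cross-polytope in the coordinates `x = (x₀, y)` and
`a = (A, b)`. Instead of `a` being a unit vector it suffices that `|bᵢ| < t < A`. -/
lemma volume_cap_prod (A t : ℝ) (m : ℕ) (b : Fin m → ℝ) (ht : 0 < t) (hA : t < A)
    (hb : ∀ i, |b i| < t) :
    volume {z : ℝ × (Fin m → ℝ) | |z.1| + ∑ i, |z.2 i| ≤ 1 ∧
        t ≤ z.1 * A + ∑ i, z.2 i * b i} =
      ENNReal.ofReal ((A - t) ^ (m + 1) / (m + 1).factorial *
        (∏ i, (2 * A / (A ^ 2 - b i ^ 2))) / A) := by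
  have hA0 : 0 < A := ht.trans hA
  rw [Measure.volume_eq_prod, Measure.prod_apply_symm (measurableSet_cap A t m b)]
  have hfib : ∀ y : Fin m → ℝ, volume ((fun s => (s, y)) ⁻¹' {z : ℝ × (Fin m → ℝ) |
        |z.1| + ∑ i, |z.2 i| ≤ 1 ∧ t ≤ z.1 * A + ∑ i, z.2 i * b i}) =
      ENNReal.ofReal (max ((A - t) - ∑ i, (A * |y i| - b i * y i)) 0) *
        ENNReal.ofReal (1 / A) := by
    intro y
    have hset : ((fun s => (s, y)) ⁻¹' {z : ℝ × (Fin m → ℝ) |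
        |z.1| + ∑ i, |z.2 i| ≤ 1 ∧ t ≤ z.1 * A + ∑ i, z.2 i * b i}) =
        Icc ((t - ∑ i, y i * b i) / A) (1 - ∑ i, |y i|) := by
      ext s
      simp only [mem_preimage, mem_ofPred_eq, mem_Icc, div_le_iff₀ hA0]
      have hyb : ∑ i, y i * b i ≤ t * ∑ i, |y i| := by
        rw [Finset.mul_sum]
        refine Finset.sum_le_sum fun i _ => ?_
        calc y i * b i ≤ |y i * b i| := le_abs_self _
          _ = |b i| * |y i| := by rw [abs_mul, mul_comm]
          _ ≤ t * |y i| := mul_le_mul_of_nonneg_right (hb i).le (abs_nonneg _)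
      constructor
      · rintro ⟨h1, h2⟩
        exact ⟨by linarith, by linarith [le_abs_self s]⟩
      · rintro ⟨h1, h2⟩
        -- The bound `∑ yᵢ bᵢ ≤ t ∑ |yᵢ| ≤ t (1 - s)` gives `(A - t) s ≥ 0`.
        have h3 : t * ∑ i, |y i| ≤ t * (1 - s) := mul_le_mul_of_nonneg_left (by linarith) ht.le
        have hs : 0 ≤ s := by
          by_contra! hs
          nlinarith [mul_neg_of_neg_of_pos hs (sub_pos.mpr hA)]
        exact ⟨by rw [abs_of_nonneg hs]; linarith, by linarith⟩
    rw [hset, Real.volume_Icc, ENNReal.ofReal_max, ENNReal.ofReal_zero, max_eq_left (zero_le),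
      ← ENNReal.ofReal_mul' (by positivity)]
    congr 1
    rw [Finset.sum_sub_distrib, ← Finset.mul_sum]
    simp_rw [mul_comm (b _)]
    field_simp
    ring
  simp_rw [hfib]
  rw [lintegral_mul_const _ (by fun_prop),
    lintegral_sum_gauge A m b (fun i => (hb i).trans hA) (A - t),
    ← ENNReal.ofReal_mul' (by positivity), max_eq_left (by linarith)]
  congr 1
  ring

theorem stmt13 (n : ℕ) [NeZero n] (hn : 3 ≤ n) (t : ℝ)
    (ht : t ∈ Set.Ioo (1 / Real.sqrt 2) 1)
    (a : EuclideanSpace ℝ (Fin n)) (ha : ‖a‖ = 1) (ha1 : t < a 0) :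
    volume ({x : EuclideanSpace ℝ (Fin n) | ∑ i, |x i| ≤ 1} ∩
        {x : EuclideanSpace ℝ (Fin n) | t ≤ ∑ i, x i * a i}) =
      ENNReal.ofReal (2 ^ (n - 1) * (a 0 - t) ^ n * (a 0) ^ (n - 2) /
        ((n.factorial : ℝ) *
          ∏ i ∈ Finset.univ.erase (0 : Fin n), ((a 0) ^ 2 - (a i) ^ 2))) := by
  obtain ⟨m, rfl⟩ : ∃ m, n = m + 2 := ⟨n - 2, by omega⟩
  have ht0 : 0 < t := lt_trans (by positivity) ht.1
  have hA0 : 0 < a 0 := ht0.trans ha1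
  have ht2 : 1 / 2 < t ^ 2 := by
    have := pow_lt_pow_left₀ ht.1 (by positivity) two_ne_zero
    rwa [div_pow, Real.sq_sqrt (by norm_num), one_pow] at this
  have hnorm : a 0 ^ 2 + ∑ i : Fin (m + 1), a i.succ ^ 2 = 1 := by
    have := EuclideanSpace.real_norm_sq_eq a
    rw [ha, Fin.sum_univ_succ] at this
    linarith
  have hb : ∀ i : Fin (m + 1), |a i.succ| < t := by
    intro i
    have h1 : a i.succ ^ 2 ≤ ∑ i : Fin (m + 1), a i.succ ^ 2 :=
      Finset.single_le_sum (f := fun i : Fin (m + 1) => a i.succ ^ 2)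
        (fun _ _ => sq_nonneg _) (Finset.mem_univ i)
    apply abs_lt_of_sq_lt_sq _ ht0.le
    have : t ^ 2 < a 0 ^ 2 := pow_lt_pow_left₀ ha1 ht0.le two_ne_zero
    linarith
  have hmp := ((EuclideanSpace.volume_preserving_symm_measurableEquiv_toLp (Fin (m + 2))).symm).symm
  have hmp2 := (volume_preserving_piFinSuccAbove (fun _ : Fin (m + 2) => ℝ) 0).comp hmp
  have hV := volume_cap_prod (a 0) t (m + 1) (fun i => a i.succ) ht0 ha1 hb
  rw [← hmp2.measure_preimage (measurableSet_cap _ _ _ _).nullMeasurableSet] at hV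
  convert hV using 2
  · ext x
    simp [Fin.sum_univ_succ, Fin.tail]
  · have hprod : ∏ i ∈ Finset.univ.erase (0 : Fin (m + 2)), ((a 0) ^ 2 - (a i) ^ 2) =
        ∏ i : Fin (m + 1), (a 0 ^ 2 - a i.succ ^ 2) := by
      rw [← Finset.compl_singleton, ← Fin.image_succ_univ,
        Finset.prod_image fun _ _ _ _ h => Fin.succ_injective _ h]
    rw [hprod, Finset.prod_div_distrib, Finset.prod_const, Finset.card_univ, Fintype.card_fin]
    have hne : ∏ i : Fin (m + 1), (a 0 ^ 2 - a i.succ ^ 2) ≠ 0 := by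
      refine Finset.prod_ne_zero_iff.mpr fun i _ => ?_
      have := sq_lt_sq.mpr (((hb i).trans ha1).trans_le (le_abs_self (a 0)))
      linarith
    simp only [Nat.add_sub_cancel, show m + 2 - 1 = m + 1 by omega]
    field_simp
    ring
end

section
/- Let n ≥ 3, t ∈ (1/√2, 1), and let a be a unit vector in ℝ^n with a_1 > t. Then a_1^{n−2}(a_1 − t)^{n−1} ≤ (1−t)^{n−1} ∏_{i=2}^n (a_1² − a_i²), with equality if and only if a = e_1. -/
/-!
Write `x = a 0` and `m = n - 1 ≥ 2`. The Weierstrass product inequality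
`∏ (1 - bᵢ) ≥ 1 - ∑ bᵢ` with `bᵢ = aᵢ² / x²`, together with `∑_{i ≠ 0} aᵢ² = 1 - x²`, gives
`∏ (x² - aᵢ²) ≥ x ^ (2m - 2) * (2x² - 1)` (`prod_lower`). It remains to see that
`((x - t) / (1 - t)) ^ m < x ^ (m - 1) * (2x² - 1)` for `x < 1`. Since `(x - t) / (1 - t) ≤ x`, this
reduces to `m = 2` (`quadratic_bound`); there the left side decreases in `t`, so one may take
`t = s = 1 / √2`, where the difference of the two sides is a positive multiple of
`(1 - x) * (s - 2 (1 - s)² x)`. So the inequality is strict unless `x = 1`, i.e. `a = e₁`.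
-/

open MeasureTheory Metric Set

/-- A homogeneous form of the Weierstrass product inequality `1 - ∑ bᵢ ≤ ∏ (1 - bᵢ)`. -/
lemma prod_lower {ι : Type*} [DecidableEq ι] (s : Finset ι) (b : ι → ℝ) (c : ℝ) (hc : 0 ≤ c)
    (hb : ∀ i ∈ s, 0 ≤ b i ∧ b i ≤ c) :
    c ^ s.card * (c - ∑ i ∈ s, b i) ≤ c * ∏ i ∈ s, (c - b i) := by
  induction s using Finset.induction_on with
  | empty => simp
  | insert j s hj ih =>
    have ih' := ih fun i hi => hb i (Finset.mem_insert_of_mem hi)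
    obtain ⟨h0, h1⟩ := hb j (Finset.mem_insert_self j s)
    have hS : 0 ≤ ∑ i ∈ s, b i :=
      Finset.sum_nonneg fun i hi => (hb i (Finset.mem_insert_of_mem hi)).1
    rw [Finset.card_insert_of_notMem hj, Finset.sum_insert hj, Finset.prod_insert hj]
    have h2 := mul_le_mul_of_nonneg_left ih' (sub_nonneg.2 h1)
    have h3 : 0 ≤ c ^ s.card * (b j * ∑ i ∈ s, b i) := by positivity
    rw [pow_succ]
    linarith

/-- The case `m = 2` of the one-variable inequality; `s` plays the role of `1 / √2`. -/
lemma quadratic_bound (s t x : ℝ) (hs : 0 < s) (hs2 : s ^ 2 = 1 / 2) (hst : s < t) (htx : t < x)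
    (hx : x < 1) : (x - t) ^ 2 < (1 - t) ^ 2 * (x * (2 * x ^ 2 - 1)) := by
  have hs7 : 7 / 10 < s := by nlinarith
  -- Monotonicity in `t` of `(x - t) / (1 - t)`, cleared of denominators.
  have h1 : (x - t) * (1 - s) ≤ (x - s) * (1 - t) := by nlinarith
  have h2 : ((x - t) * (1 - s)) ^ 2 ≤ ((x - s) * (1 - t)) ^ 2 :=
    pow_le_pow_left₀ (mul_nonneg (by linarith) (by linarith)) h1 2
  have h3 : 0 < (1 - x) * (s - 2 * (1 - s) ^ 2 * x) := by
    apply mul_pos (by linarith)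
    have : (1 - s) ^ 2 < 9 / 100 := by nlinarith
    nlinarith
  have h4 : (x - s) ^ 2 < (1 - s) ^ 2 * (x * (2 * x ^ 2 - 1)) := by
    have h5 : (1 - s) ^ 2 * (x * (2 * x ^ 2 - 1)) - (x - s) ^ 2
        = (x - s) * ((1 - x) * (s - 2 * (1 - s) ^ 2 * x)) := by
      linear_combination (2 * x * (1 - s) ^ 2 - 2 * x * (1 - s) * (x - s)) * hs2
    have := mul_pos (show 0 < x - s by linarith) h3
    linarith
  have h6 := mul_lt_mul_of_pos_left h4 (show 0 < (1 - t) ^ 2 from pow_pos (by linarith) 2)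
  have h7 : 0 < (1 - s) ^ 2 := pow_pos (by linarith) 2
  refine lt_of_mul_lt_mul_left ?_ h7.le
  nlinarith

theorem stmt15 (n : ℕ) [NeZero n] (hn : 3 ≤ n) (t : ℝ)
    (ht : t ∈ Set.Ioo (1 / Real.sqrt 2) 1)
    (a : EuclideanSpace ℝ (Fin n)) (ha : ‖a‖ = 1) (ha1 : t < a 0) :
    (a 0) ^ (n - 2) * (a 0 - t) ^ (n - 1) ≤
      (1 - t) ^ (n - 1) * ∏ i ∈ Finset.univ.erase (0 : Fin n), ((a 0) ^ 2 - (a i) ^ 2) ∧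
    ((a 0) ^ (n - 2) * (a 0 - t) ^ (n - 1) =
        (1 - t) ^ (n - 1) * ∏ i ∈ Finset.univ.erase (0 : Fin n), ((a 0) ^ 2 - (a i) ^ 2) ↔
      a = EuclideanSpace.single (0 : Fin n) (1:ℝ)) := by
  obtain ⟨hst, ht1⟩ := ht
  have hs : 0 < 1 / Real.sqrt 2 := by positivity
  have hs2 : (1 / Real.sqrt 2) ^ 2 = 1 / 2 := by
    rw [div_pow, Real.sq_sqrt (by norm_num)]; norm_num
  generalize 1 / Real.sqrt 2 = s at *
  have hx0 : 0 < a 0 := by linarith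
  have hsum : ∑ i ∈ Finset.univ.erase (0 : Fin n), (a i) ^ 2 = 1 - (a 0) ^ 2 := by
    have h1 := EuclideanSpace.real_norm_sq_eq a
    rw [ha, ← Finset.add_sum_erase _ _ (Finset.mem_univ (0 : Fin n))] at h1
    linarith
  have hle : ∀ i ∈ Finset.univ.erase (0 : Fin n), (a i) ^ 2 ≤ 1 - (a 0) ^ 2 := fun i hi =>
    hsum ▸ Finset.single_le_sum (f := fun i => (a i) ^ 2) (fun j _ => sq_nonneg _) hi
  have hx1 : a 0 ≤ 1 := by
    have : 0 ≤ 1 - (a 0) ^ 2 := hsum ▸ Finset.sum_nonneg fun j _ => sq_nonneg _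
    nlinarith
  have heq : a = EuclideanSpace.single (0 : Fin n) (1:ℝ) →
      (a 0) ^ (n - 2) * (a 0 - t) ^ (n - 1) =
        (1 - t) ^ (n - 1) * ∏ i ∈ Finset.univ.erase (0 : Fin n), ((a 0) ^ 2 - (a i) ^ 2) := by
    rintro rfl
    rw [Finset.prod_eq_one]
    · simp
    · intro i hi
      simp [Finset.ne_of_mem_erase hi]
  rcases hx1.eq_or_lt with hx1 | hx1
  · have hae : a = EuclideanSpace.single (0 : Fin n) (1:ℝ) := by
      ext i
      by_cases hi : i = 0
      · simp [hi, hx1]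
      · have := hle i (by simp [hi])
        rw [hx1] at this
        have h0 : a i = 0 := by nlinarith
        simp [hi, h0]
    exact ⟨(heq hae).le, fun _ => hae, heq⟩
  · have hlt : (a 0) ^ (n - 2) * (a 0 - t) ^ (n - 1) <
        (1 - t) ^ (n - 1) * ∏ i ∈ Finset.univ.erase (0 : Fin n), ((a 0) ^ 2 - (a i) ^ 2) := by
      obtain ⟨k, rfl⟩ := Nat.exists_eq_add_of_le' hn
      have hprod := prod_lower (Finset.univ.erase (0 : Fin (k + 3))) (fun i => (a i) ^ 2)
        ((a 0) ^ 2) (sq_nonneg _) (fun i hi => ⟨sq_nonneg _, by have := hle i hi; nlinarith⟩)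
      rw [hsum, Finset.card_erase_of_mem (Finset.mem_univ _), Finset.card_univ,
        Fintype.card_fin] at hprod
      rw [show k + 3 - 1 = k + 2 by lia] at *
      rw [show k + 3 - 2 = k + 1 by lia]
      have hq := quadratic_bound s t (a 0) hs hs2 hst ha1 hx1
      generalize ∏ i ∈ Finset.univ.erase (0 : Fin (k + 3)), ((a 0) ^ 2 - (a i) ^ 2) = P at *
      generalize a 0 = x at *
      have hP : (x ^ 2) ^ (k + 1) * (2 * x ^ 2 - 1) ≤ P := by
        refine le_of_mul_le_mul_left ?_ (show 0 < x ^ 2 by positivity)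
        calc _ = (x ^ 2) ^ (k + 2) * (x ^ 2 - (1 - x ^ 2)) := by ring
          _ ≤ _ := hprod
      have hk : (x - t) ^ k ≤ ((1 - t) * x) ^ k :=
        pow_le_pow_left₀ (by linarith) (by nlinarith) k
      have h1t : 0 < 1 - t := by linarith
      have hxt : 0 < x - t := by linarith
      calc x ^ (k + 1) * (x - t) ^ (k + 2)
          = x ^ (k + 1) * ((x - t) ^ k * (x - t) ^ 2) := by ring
        _ < x ^ (k + 1) * ((x - t) ^ k * ((1 - t) ^ 2 * (x * (2 * x ^ 2 - 1)))) := by gcongr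
        _ ≤ x ^ (k + 1) * (((1 - t) * x) ^ k * ((1 - t) ^ 2 * (x * (2 * x ^ 2 - 1)))) := by
          have := (sq_nonneg (x - t)).trans hq.le
          gcongr
        _ = (1 - t) ^ (k + 2) * ((x ^ 2) ^ (k + 1) * (2 * x ^ 2 - 1)) := by
          rw [mul_pow]; ring
        _ ≤ _ := by gcongr
    exact ⟨hlt.le, fun h => absurd h hlt.ne, heq⟩
end

section
/- For every t ∈ (1/√2, 1) and every x ∈ (t, 1), one has x(x − t)² < (1−t)² x² (2x² − 1). -/
/-!
Put `s = 1 / √2`. For fixed `x < 1` the ratio `(x - t) / (1 - t)` decreases in `t`, so it suffices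
to bound it at the endpoint `t = s`, where the claim reads `(x - s)² ≤ (1 - s)² x (2x² - 1)`.
Since `2x² - 1 = 2(x - s)(x + s)`, a factor `x - s` cancels and what remains is a quadratic
inequality in `x` with a root at `x = 1`, namely `0 < (1 - x)(s - 2(1 - s)² x)`; it holds because
`2(1 - s)² = 3 - 4s < s`.
-/

theorem stmt16 (t x : ℝ) (ht : 1 / Real.sqrt 2 < t) (htx : t < x) (hx : x < 1) :
    x * (x - t) ^ 2 < (1 - t) ^ 2 * x ^ 2 * (2 * x ^ 2 - 1) := by
  obtain ⟨s, hs⟩ : ∃ s, s = 1 / Real.sqrt 2 := ⟨_, rfl⟩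
  have hs0 : 0 < s := by rw [hs]; positivity
  have hs2 : s ^ 2 = 1 / 2 := by
    rw [hs, div_pow, Real.sq_sqrt (by norm_num)]; norm_num
  rw [← hs] at ht
  have hs6 : 3 / 5 < s := by nlinarith
  have hx0 : 0 < x := by linarith
  have hratio : (x - t) * (1 - s) < (x - s) * (1 - t) := by
    nlinarith [mul_pos (sub_pos.2 ht) (sub_pos.2 hx)]
  have hsq : ((x - t) * (1 - s)) ^ 2 < ((x - s) * (1 - t)) ^ 2 :=
    pow_lt_pow_left₀ hratio (mul_nonneg (by linarith) (by linarith)) two_ne_zero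
  have hquad : x - s ≤ 2 * (1 - s) ^ 2 * x * (x + s) := by
    have h1 : 0 ≤ (1 - x) * (s - (3 - 4 * s) * x) :=
      mul_nonneg (by linarith) (by nlinarith)
    have h2 : 2 * (1 - s) ^ 2 * x * (x + s) - (x - s) = (1 - x) * (s - (3 - 4 * s) * x) := by
      linear_combination (2 * x ^ 2 + 2 * x * s - 4 * x) * hs2
    linarith
  have hend : (x - s) ^ 2 ≤ (1 - s) ^ 2 * (x * (2 * x ^ 2 - 1)) := by
    have h1 := mul_le_mul_of_nonneg_left hquad (by linarith : 0 ≤ x - s)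
    have h2 : (x - s) * (2 * (1 - s) ^ 2 * x * (x + s))
        = (1 - s) ^ 2 * (x * (2 * x ^ 2 - 1)) := by
      linear_combination (-2 * (1 - s) ^ 2 * x) * hs2
    rw [h2] at h1
    linarith
  have hmain : (x - t) ^ 2 < (1 - t) ^ 2 * (x * (2 * x ^ 2 - 1)) := by
    have h1 := mul_le_mul_of_nonneg_left hend (sq_nonneg (1 - t))
    have h2 : 0 < (1 - s) ^ 2 := pow_pos (by linarith) 2
    refine lt_of_mul_lt_mul_left ?_ h2.le
    linarith
  linarith [mul_lt_mul_of_pos_left hmain hx0]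
end

section
/- Let n ≥ 4 be an integer. For every t ∈ (1/√2, 1) and every x ∈ (t, 1), one has x^{n−2}(x − t)^{n−1} < (1−t)^{n−1}(2x² − 1)^{n−1}. -/
/-!
Put `s = √2 / 2`, so that `2 * x ^ 2 - 1 = 2 * (x - s) * (x + s)`. The ratio `(x - t) / (1 - t)`
decreases in `t`, hence it is less than `(x - s) / (1 - s)`, and therefore
`(x - t) * u < (1 - t) * (2 * x ^ 2 - 1)` with `u = 2 * (1 - s) * (x + s) = 1 - c * (1 - x)`,
`c = 2 - √2`. It remains to see that `x ^ (n - 2) ≤ u ^ (n - 1)`. For `n = 4` this is the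
one-variable inequality `x ^ 2 ≤ u ^ 3` of `sq_le_affine_cube`; it also gives `x ≤ u`, which yields
the remaining factors.
-/

/-- In terms of `y = 1 - x`, the difference of the two sides is
`y * ((2 - 3 * c) + (3 * c ^ 2 - 1) * y - c ^ 3 * y ^ 2)` with `c = 2 - r`. -/
lemma sq_le_affine_cube (r x : ℝ) (hr : r ^ 2 = 2) (hr0 : 0 < r) (hx0 : r / 2 < x) (hx : x < 1) :
    x ^ 2 ≤ (1 - (2 - r) * (1 - x)) ^ 3 := by
  have h1 : 1.414 < r := by nlinarith
  have h2 : r < 1.415 := by nlinarith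
  obtain ⟨c, rfl⟩ : ∃ c, r = 2 - c := ⟨2 - r, by ring⟩
  obtain ⟨y, rfl⟩ : ∃ y, x = 1 - y := ⟨1 - x, by ring⟩
  have hy : 0 < y := by linarith
  have hy1 : y ≤ 0.3 := by linarith
  have hc0 : 0.585 ≤ c := by linarith
  have hc1 : c ≤ 0.586 := by linarith
  have hc2 : 1 ≤ 3 * c ^ 2 := by nlinarith
  have hcy : (c * y) ^ 2 ≤ 0.2 ^ 2 := by
    have : c * y ≤ 0.586 * 0.3 := by gcongr
    have : 0 ≤ c * y := by positivity
    gcongr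
    linarith
  have hc3 : c * (c * y) ^ 2 ≤ 0.586 * 0.2 ^ 2 := by gcongr
  have key : 0 ≤ y * ((2 - 3 * c) + (3 * c ^ 2 - 1) * y - c * (c * y) ^ 2) := by
    have : 0 ≤ (3 * c ^ 2 - 1) * y := mul_nonneg (by linarith) hy.le
    apply mul_nonneg hy.le
    linarith
  linear_combination key

theorem stmt17 (n : ℕ) (hn : 4 ≤ n) (t x : ℝ)
    (ht : 1 / Real.sqrt 2 < t) (ht1 : t < 1) (htx : t < x) (hx : x < 1) :
    x ^ (n - 2) * (x - t) ^ (n - 1) < (1 - t) ^ (n - 1) * (2 * x ^ 2 - 1) ^ (n - 1) := by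
  obtain ⟨r, hrdef⟩ : ∃ r, r = Real.sqrt 2 := ⟨_, rfl⟩
  have hr : r ^ 2 = 2 := by rw [hrdef]; exact Real.sq_sqrt (by norm_num)
  have hr0 : 0 < r := by rw [hrdef]; positivity
  rw [← hrdef] at ht
  have hs : 1 / r = r / 2 := by field_simp; linarith
  rw [hs] at ht
  have hcube := sq_le_affine_cube r x hr hr0 (ht.trans htx) hx
  obtain ⟨u, hu⟩ : ∃ u, u = 1 - (2 - r) * (1 - x) := ⟨_, rfl⟩
  rw [← hu] at hcube
  have hx0 : 0 < x := by linarith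
  have hu0 : 0 < u := by
    have : 0 < u ^ 3 := lt_of_lt_of_le (by positivity) hcube
    exact (Odd.pow_pos_iff (by decide)).mp this
  have hxu : x ≤ u := by
    refine le_of_pow_le_pow_left₀ three_ne_zero hu0.le (le_trans ?_ hcube)
    exact pow_le_pow_of_le_one hx0.le hx.le (by norm_num)
  have hlin : (x - t) * u < (1 - t) * (2 * x ^ 2 - 1) := by
    have h : 0 < 2 * (x + r / 2) * ((t - r / 2) * (1 - x)) := by
      have := sub_pos.mpr ht
      have := sub_pos.mpr hx
      positivity
    rw [hu]
    -- `h` is the claim up to a multiple of `r ^ 2 = 2`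
    nlinarith [h, hr, congrArg (· * x) hr, congrArg (· * t) hr]
  have hxt : 0 < x - t := sub_pos.mpr htx
  obtain ⟨k, rfl⟩ := Nat.exists_eq_add_of_le hn
  have e2 : 4 + k - 2 = 2 + k := by omega
  have e1 : 4 + k - 1 = 3 + k := by omega
  rw [e1, e2, ← mul_pow]
  calc x ^ (2 + k) * (x - t) ^ (3 + k) ≤ u ^ (3 + k) * (x - t) ^ (3 + k) := by
        gcongr ?_ * _
        rw [pow_add, pow_add]
        gcongr
    _ = ((x - t) * u) ^ (3 + k) := by rw [mul_pow, mul_comm]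
    _ < _ := pow_lt_pow_left₀ hlin (by positivity) (by omega)
end
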